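/- The thermodynamic limit G_∞(A) = lim_{N→∞} G_N(A) exists and is given by G_∞(A) = −log( (∫_ℝ exp(−(ψ₁+P)(y) − E^cg(A,y)) dy) / (∫_ℝ exp(−ψ(y) − E^cg_{h=0}(A,y)) dy) ), where ψ₁(y) = ψ(y) + h₁·y and E^cg_{h=0}(A,y) = W'(A)·(A − y). -/

import Mathlib

/-!
Tilting every bond by the stress `s = W'(A)` turns both configuration integrals into values at `N A`
of convolutions of `N` single-bond Gibbs weights, and the tilts cancel in `G_N`. An upper bound on
`ψ''` makes these weights semi-log-convex, with a constant that improves linearly under convolution,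
while exponential moments centre a long convolution at its mean. Together they force the convolution
to be flat near `N A` on the scale of a single bond, so that exchanging one factor multiplies its
value by asymptotically the ratio of the masses of the two factors. Exchanging all factors one after
the other, with the summability of the forces dominating the errors, gives `G_N` as a sum of
log-ratios of masses in the limit. The far-field part `∑ (log Z(s - h_i) - log Z(s))` of this sum
is `-(A H + inf J_∞)` by Legendre duality applied bond by bond.
-/

noncomputable section

open MeasureTheory Real Filter

/-- Extend interior degrees of freedom `u : ℝ^(n-1)` to the whole chain via the
boundary conditions `u 0 = 0` and `u n = b`. -/
def bc (n : ℕ) (b : ℝ) (u : Fin (n - 1) → ℝ) : ℕ → ℝ := fun i =>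
  if h : 0 < i ∧ i < n then u ⟨i - 1, by omega⟩ else if i = 0 then 0 else b

/-- The chain energy `∑_{i=1}^n φ_i (u_i - u_{i-1})` with boundary conditions
`u 0 = 0`, `u n = b`. -/
def chainE (φ : ℕ → ℝ → ℝ) (n : ℕ) (b : ℝ) (u : Fin (n - 1) → ℝ) : ℝ :=
  ∑ i ∈ Finset.range n, φ (i + 1) (bc n b u (i + 1) - bc n b u i)

/-- The free energy `-log ∫_{ℝ^{N-1}} exp(-∑ φ_i(u_i-u_{i-1}) - defect(u₁)) du`. -/
def freeEnergy (φ : ℕ → ℝ → ℝ) (defect : ℝ → ℝ) (N : ℕ) (A : ℝ) : ℝ :=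
  - Real.log (∫ u : Fin (N - 1) → ℝ,
      Real.exp (-(chainE φ N (N * A) u) - defect (bc N (N * A) u 1)))

/-- The Cauchy–Born strain energy `W(A)`. -/
def W (ψ : ℝ → ℝ) (A : ℝ) : ℝ :=
  ⨆ σ : ℝ, (σ * A - Real.log (∫ y : ℝ, Real.exp (-ψ y + σ * y)))

/-- `inf { J_∞(A;v) : v' ∈ ℓ² }`, where
`J_∞(A;v) = ∑_{i=2}^∞ [W(A + v'_i) - W(A) - W'(A) v'_i + h_i v'_i]`
(the sequence `v i` below stands for the increments `v'_{i+2}`). -/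
def infJinf (Wf : ℝ → ℝ) (h : ℕ → ℝ) (A : ℝ) : ℝ :=
  sInf { E : ℝ | ∃ v : ℕ → ℝ, Summable (fun i => (v i) ^ 2) ∧
    E = ∑' i : ℕ, (Wf (A + v i) - Wf A - deriv Wf A * v i + h (i + 2) * v i) }

/-- The coarse-grained energy with forces
`E^cg(A,y) = (A-y) W'(A) + A H + inf J_∞(A;·)`. -/
def EcgF (ψ : ℝ → ℝ) (h : ℕ → ℝ) (A y : ℝ) : ℝ :=
  (A - y) * deriv (W ψ) A + A * (∑' i : ℕ, h (i + 2)) + infJinf (W ψ) h A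

open scoped Convolution

/-! ### Convolutions of positive weights -/

/-- An unnormalised positive continuous probability density on the line. -/
structure IsWeight (f : ℝ → ℝ) : Prop where
  continuous : Continuous f
  pos : ∀ x, 0 < f x
  integrable : Integrable f

/-- A bounded weight; boundedness makes all its convolutions with weights exist pointwise. -/
structure IsBddWeight (f : ℝ → ℝ) : Prop extends IsWeight f where
  bddAbove : BddAbove (Set.range f)

namespace IsWeight

variable {f g : ℝ → ℝ}

lemma integral_pos (hf : IsWeight f) : 0 < ∫ x, f x :=
  integral_pos_of_integrable_nonneg_nonzero hf.continuous hf.integrable (fun x => (hf.pos x).le)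
    (hf.pos 0).ne'

lemma norm_eq (hf : IsWeight f) : (fun x => ‖f x‖) = f :=
  funext fun x => norm_of_nonneg (hf.pos x).le

lemma integral_convolution (hf : IsWeight f) (hg : IsWeight g) :
    ∫ x, (f ⋆ g) x = (∫ x, f x) * ∫ x, g x :=
  MeasureTheory.integral_convolution _ hf.integrable hg.integrable

lemma integrable_mul (hf : IsWeight f) (hg : IsBddWeight g) (x : ℝ) :
    Integrable fun y => f y * g (x - y) := by
  obtain ⟨C, hC⟩ := hg.bddAbove
  refine hf.integrable.mul_bdd (c := C) ?_ (ae_of_all _ fun y => ?_)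
  · exact (hg.continuous.comp (continuous_const.sub continuous_id)).aestronglyMeasurable
  · rw [norm_of_nonneg (hg.pos _).le]
    exact hC ⟨_, rfl⟩

lemma integrable_mul_add (hf : IsWeight f) (hg : IsBddWeight g) (x r s : ℝ) :
    Integrable fun y => f (y + r) * g (x - y + s) := by
  convert (hf.integrable_mul hg (x + (r + s))).comp_add_right r using 3
  congr 1; ring

lemma convolution (hf : IsWeight f) (hg : IsBddWeight g) : IsBddWeight (f ⋆ g) where
  continuous := BddAbove.continuous_convolution_right_of_integrable _
    (by simpa only [hg.norm_eq] using hg.bddAbove) hf.integrable hg.continuous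
  pos x := integral_pos_of_integrable_nonneg_nonzero (x := 0)
    (hf.continuous.mul (hg.continuous.comp (continuous_const.sub continuous_id)))
    (hf.integrable_mul hg x) (fun _ => (mul_pos (hf.pos _) (hg.pos _)).le)
    (mul_pos (hf.pos _) (hg.pos _)).ne'
  integrable := hf.integrable.integrable_convolution _ hg.integrable
  bddAbove := by
    obtain ⟨C, hC⟩ := hg.bddAbove
    refine ⟨(∫ y, f y) * C, ?_⟩
    rintro _ ⟨x, rfl⟩
    rw [← integral_mul_const]
    exact integral_mono (hf.integrable_mul hg x) (hf.integrable.mul_const C)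
      fun y => mul_le_mul_of_nonneg_left (hC ⟨_, rfl⟩) (hf.pos y).le

lemma convolution_assoc {k : ℝ → ℝ} (hf : IsWeight f) (hg : IsBddWeight g) (hk : IsBddWeight k) :
    (f ⋆ g) ⋆ k = f ⋆ (g ⋆ k) := by
  funext x
  refine MeasureTheory.convolution_assoc _ _ _ _ (fun a b c => mul_assoc a b c)
    hf.continuous.aestronglyMeasurable hg.continuous.aestronglyMeasurable
    hk.continuous.aestronglyMeasurable (ae_of_all _ (hf.integrable_mul hg)) ?_ ?_
  · simp only [hg.norm_eq, hk.norm_eq]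
    exact ae_of_all _ (hg.integrable_mul hk)
  · simp only [hf.norm_eq, hg.norm_eq, hk.norm_eq]
    exact hf.integrable_mul (hg.convolution hk) x

end IsWeight

lemma convolution_comm (f g : ℝ → ℝ) : f ⋆ g = g ⋆ f := by
  funext x
  rw [convolution_lsmul_swap, convolution_lsmul]
  simp only [smul_eq_mul, mul_comm]

lemma convolution_apply_add (f g : ℝ → ℝ) (x r s : ℝ) :
    (f ⋆ g) (x + (r + s)) = ∫ y, f (y + r) * g (x - y + s) := by
  rw [convolution_lsmul, ← integral_add_right_eq_self _ r]
  congr with y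
  rw [smul_eq_mul, show x + (r + s) - (y + r) = x - y + s by ring]

lemma exp_mul_convolution (s : ℝ) (f g : ℝ → ℝ) (x : ℝ) :
    exp (s * x) * (f ⋆ g) x = ((fun y => exp (s * y) * f y) ⋆ fun y => exp (s * y) * g y) x := by
  simp only [convolution_lsmul, smul_eq_mul, ← integral_const_mul]
  congr with y
  rw [show s * x = s * y + s * (x - y) by ring, exp_add]
  ring

lemma sq_integral_le_mul_of_sq_le {α : Type*} [MeasurableSpace α] {μ : Measure α} {f a b : α → ℝ}
    (ha : 0 ≤ a) (hb : 0 ≤ b) (hai : Integrable a μ) (hbi : Integrable b μ)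
    (h : ∀ x, f x ^ 2 ≤ a x * b x) : (∫ x, f x ∂μ) ^ 2 ≤ (∫ x, a x ∂μ) * ∫ x, b x ∂μ := by
  have memLp_sqrt {u : α → ℝ} (hu : 0 ≤ u) (hui : Integrable u μ) :
      MemLp (fun x => √(u x)) 2 μ := by
    rw [memLp_two_iff_integrable_sq
      (continuous_sqrt.comp_aestronglyMeasurable hui.aestronglyMeasurable)]
    simpa only [sq_sqrt (hu _)] using hui
  have bound : |∫ x, f x ∂μ| ≤ √(∫ x, a x ∂μ) * √(∫ x, b x ∂μ) :=
    calc |∫ x, f x ∂μ| ≤ ∫ x, √(a x) * √(b x) ∂μ := by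
          rw [← norm_eq_abs]
          refine norm_integral_le_of_norm_le
            ((memLp_sqrt ha hai).integrable_mul (memLp_sqrt hb hbi)) (ae_of_all _ fun x => ?_)
          rw [norm_eq_abs, ← sqrt_mul (ha x)]
          exact abs_le_sqrt (h x)
      _ ≤ (∫ x, √(a x) ^ (2 : ℝ) ∂μ) ^ (1 / 2 : ℝ) * (∫ x, √(b x) ^ (2 : ℝ) ∂μ) ^ (1 / 2 : ℝ) :=
          integral_mul_le_Lp_mul_Lq_of_nonneg .two_two (ae_of_all _ fun _ => sqrt_nonneg _)
            (ae_of_all _ fun _ => sqrt_nonneg _)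
            (by simpa using memLp_sqrt ha hai) (by simpa using memLp_sqrt hb hbi)
      _ = √(∫ x, a x ∂μ) * √(∫ x, b x ∂μ) := by
          simp only [rpow_two, sq_sqrt (ha _), sq_sqrt (hb _), ← sqrt_eq_rpow]
  calc (∫ x, f x ∂μ) ^ 2 = |∫ x, f x ∂μ| ^ 2 := (sq_abs _).symm
    _ ≤ (√(∫ x, a x ∂μ) * √(∫ x, b x ∂μ)) ^ 2 := by gcongr
    _ = _ := by rw [mul_pow, sq_sqrt (integral_nonneg ha), sq_sqrt (integral_nonneg hb)]

/-! ### Semi-log-convexity -/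

/-- `g` is at most as log-concave as a Gaussian of variance `v`: the midpoint form of
`(-log g)'' ≤ 1 / v`. -/
structure SemiLogConvex (v : ℝ) (g : ℝ → ℝ) : Prop extends IsWeight g where
  var_pos : 0 < v
  midpoint : ∀ x t, g x ^ 2 * exp (-(t ^ 2 / v)) ≤ g (x + t) * g (x - t)

lemma mul_sub_le_of_two_mul_le_add {f : ℕ → ℝ} (hf : ∀ j, 2 * f (j + 1) ≤ f j + f (j + 2)) (k : ℕ) :
    k * (f 1 - f 0) ≤ f k - f 0 := by
  have increment_mono : Monotone fun j => f (j + 1) - f j :=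
    monotone_nat_of_le_succ fun j => by linarith [hf j]
  have := Finset.card_nsmul_le_sum (Finset.range k) _ (f 1 - f 0)
    fun j _ => increment_mono (Nat.zero_le j)
  rwa [Finset.card_range, nsmul_eq_mul, Finset.sum_range_sub] at this

namespace SemiLogConvex

variable {v w : ℝ} {f g : ℝ → ℝ}

lemma mul_sqrt_le_integral (hg : SemiLogConvex v g) (x : ℝ) : g x * √(2 * π * v) ≤ ∫ y, g y := by
  have hv := hg.var_pos
  have right := hg.integrable.comp_add_left x
  have left := hg.integrable.comp_sub_left x
  have two_mul_le (t : ℝ) : 2 * g x * exp (-(2 * v)⁻¹ * t ^ 2) ≤ g (x + t) + g (x - t) := by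
    have exp_sq : exp (-(2 * v)⁻¹ * t ^ 2) ^ 2 = exp (-(t ^ 2 / v)) := by
      rw [← exp_nat_mul]; congr 1; push_cast; field_simp
    refine le_of_sq_le_sq ?_ (add_pos (hg.pos _) (hg.pos _)).le
    nlinarith [hg.midpoint x t, sq_nonneg (g (x + t) - g (x - t))]
  have key : ∫ t, 2 * g x * exp (-(2 * v)⁻¹ * t ^ 2) ≤ ∫ t, (g (x + t) + g (x - t)) :=
    integral_mono ((integrable_exp_neg_mul_sq (by positivity)).const_mul _)
      (right.add left) two_mul_le
  rw [integral_const_mul, integral_gaussian, integral_add right left, integral_add_left_eq_self,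
    integral_sub_left_eq_self, show π / (2 * v)⁻¹ = 2 * π * v by field_simp] at key
  linarith

lemma toIsBddWeight (hg : SemiLogConvex v g) : IsBddWeight g where
  toIsWeight := hg.toIsWeight
  bddAbove := by
    have hv := hg.var_pos
    refine ⟨(∫ y, g y) / √(2 * π * v), ?_⟩
    rintro _ ⟨x, rfl⟩
    rw [le_div_iff₀ (by positivity)]
    exact hg.mul_sqrt_le_integral x

-- Splitting a shift by `t` into `v t / (v + w)` and `w t / (v + w)` makes the variances add up.
lemma convolution (hf : SemiLogConvex v f) (hg : SemiLogConvex w g) :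
    SemiLogConvex (v + w) (f ⋆ g) where
  toIsWeight := (hf.toIsWeight.convolution hg.toIsBddWeight).toIsWeight
  var_pos := add_pos hf.var_pos hg.var_pos
  midpoint x t := by
    have hv := hf.var_pos
    have hw := hg.var_pos
    set r := v * t / (v + w) with hr
    set s := w * t / (v + w) with hs
    have split_shift : r + s = t := by rw [hr, hs]; field_simp
    have split_exponent : t ^ 2 / (v + w) = r ^ 2 / v + s ^ 2 / w := by rw [hr, hs]; field_simp
    have factor : (f ⋆ g) x ^ 2 * exp (-(t ^ 2 / (v + w)))
        = (∫ y, exp (-(t ^ 2 / (v + w)) / 2) * (f y * g (x - y))) ^ 2 := by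
      rw [integral_const_mul, mul_pow, ← exp_nat_mul, convolution_lsmul, mul_comm]
      simp only [smul_eq_mul]
      congr 2; push_cast; ring
    rw [factor, ← split_shift, convolution_apply_add, show x - (r + s) = x + (-r + -s) by ring,
      convolution_apply_add]
    refine sq_integral_le_mul_of_sq_le (fun y => (mul_pos (hf.pos _) (hg.pos _)).le)
      (fun y => (mul_pos (hf.pos _) (hg.pos _)).le)
      (hf.integrable_mul_add hg.toIsBddWeight x r s)
      (hf.integrable_mul_add hg.toIsBddWeight x (-r) (-s)) fun y => ?_
    calc _ = (f y ^ 2 * exp (-(r ^ 2 / v))) * (g (x - y) ^ 2 * exp (-(s ^ 2 / w))) := by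
          rw [split_shift, mul_pow, mul_pow, ← exp_nat_mul, split_exponent, mul_mul_mul_comm,
            ← exp_add]
          push_cast; ring_nf
      _ ≤ (f (y + r) * f (y - r)) * (g (x - y + s) * g (x - y - s)) :=
          mul_le_mul (hf.midpoint y r) (hg.midpoint (x - y) s) (by positivity)
            (mul_pos (hf.pos _) (hf.pos _)).le
      _ = _ := by rw [mul_mul_mul_comm]; simp only [sub_eq_add_neg]

lemma log_midpoint (hg : SemiLogConvex v g) (x t : ℝ) :
    2 * log (g x) - t ^ 2 / v ≤ log (g (x + t)) + log (g (x - t)) := by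
  have := log_le_log (mul_pos (pow_pos (hg.pos x) 2) (exp_pos _)) (hg.midpoint x t)
  rw [log_mul (pow_pos (hg.pos x) 2).ne' (exp_pos _).ne', log_exp, log_pow,
    log_mul (hg.pos _).ne' (hg.pos _).ne'] at this
  push_cast at this
  linarith

-- A large increment of `log g` would be repeated about `k` times and violate the upper bound.
lemma log_sub_log_le (hg : SemiLogConvex v g) (x t : ℝ) {k : ℕ} (hk : 0 < k) :
    log (g (x + t)) - log (g x) ≤
      (log ((∫ y, g y) / √(2 * π * v)) - log (g x)) / k + k * (t ^ 2 / (2 * v)) := by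
  have hv := hg.var_pos
  have hk' : (0 : ℝ) < k := Nat.cast_pos.2 hk
  have convex (j : ℕ) := hg.log_midpoint (x + (j + 1) * t) t
  have repeated := mul_sub_le_of_two_mul_le_add
    (f := fun j => log (g (x + j * t)) + j ^ 2 * (t ^ 2 / (2 * v))) (fun j => by
      have := convex j
      rw [show x + (j + 1) * t + t = x + (j + 2) * t by ring,
        show x + (j + 1) * t - t = x + j * t by ring,
        show t ^ 2 / v = 2 * (t ^ 2 / (2 * v)) by field_simp] at this
      push_cast
      linarith) k
  have upper : log (g (x + k * t)) ≤ log ((∫ y, g y) / √(2 * π * v)) := by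
    refine log_le_log (hg.pos _) ?_
    rw [le_div_iff₀ (by positivity)]
    exact hg.mul_sqrt_le_integral _
  simp only [Nat.cast_one, one_mul, Nat.cast_zero, zero_mul, add_zero] at repeated
  rw [div_add' _ _ _ hk'.ne', le_div_iff₀ hk']
  nlinarith [mul_nonneg hk'.le (show 0 ≤ t ^ 2 / (2 * v) by positivity)]

lemma sq_mul_exp_le (hg : SemiLogConvex v g) (x z : ℝ) :
    g z ^ 2 * exp (-((x - z) ^ 2 / v)) * √(2 * π * v) ≤ g x * ∫ y, g y := by
  have reflected := hg.midpoint z (x - z)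
  rw [add_sub_cancel] at reflected
  calc _ ≤ g x * g (z - (x - z)) * √(2 * π * v) := by gcongr
    _ ≤ g x * ∫ y, g y := by
      rw [mul_assoc]
      exact mul_le_mul_of_nonneg_left (hg.mul_sqrt_le_integral _) (hg.pos x).le

lemma integral_div_le (hg : SemiLogConvex v g) {a b x z : ℝ} (hz : ∫ y, g y ≤ a * g z)
    (hb : (x - z) ^ 2 / v ≤ b) :
    (∫ y, g y) / √(2 * π * v) ≤ a ^ 2 * exp b / (2 * π * v) * g x := by
  have hv := hg.var_pos
  have mass_pos := hg.integral_pos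
  set S := √(2 * π * v)
  have S_sq : S ^ 2 = 2 * π * v := sq_sqrt (by positivity)
  have key : (∫ y, g y) * S ≤ a ^ 2 * exp b * g x := by
    refine le_of_mul_le_mul_left ?_ mass_pos
    calc _ = (∫ y, g y) ^ 2 * S := by ring
      _ ≤ (a * g z) ^ 2 * S := by gcongr
      _ ≤ (a * g z) ^ 2 * S * exp (b - (x - z) ^ 2 / v) :=
          le_mul_of_one_le_right (by positivity) (one_le_exp (by linarith))
      _ = a ^ 2 * exp b * (g z ^ 2 * exp (-((x - z) ^ 2 / v)) * S) := by
          rw [sub_eq_add_neg, exp_add]; ring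
      _ ≤ a ^ 2 * exp b * (g x * ∫ y, g y) :=
          mul_le_mul_of_nonneg_left (hg.sq_mul_exp_le x z) (by positivity)
      _ = _ := by ring
  calc (∫ y, g y) / S = (∫ y, g y) * S / S ^ 2 := by field_simp
    _ ≤ a ^ 2 * exp b * g x / S ^ 2 := by gcongr
    _ = _ := by rw [S_sq]; ring

end SemiLogConvex

/-! ### Exponential moments -/

/-- Up to a factor `exp β`, the exponential moments of `g` of order at most one are bounded by those
of a Gaussian of mean `m` and variance `2 w`. -/
structure HasExpMoments (m w β : ℝ) (g : ℝ → ℝ) : Prop where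
  integrable_exp_mul : ∀ l, |l| ≤ 1 → Integrable fun x => exp (l * x) * g x
  integral_exp_mul_le : ∀ l, |l| ≤ 1 →
    ∫ x, exp (l * x) * g x ≤ (∫ x, g x) * exp (l * m + w * l ^ 2 + β)

lemma one_le_exp_neg_mul_exp_add_exp_neg {R y : ℝ} (h : R ≤ |y|) :
    1 ≤ exp (-R) * (exp y + exp (-y)) :=
  calc 1 ≤ exp (-R) * exp |y| := by rw [← exp_add, one_le_exp_iff]; linarith
    _ ≤ _ := by gcongr; exact exp_abs_le y

namespace HasExpMoments

variable {m m' w w' β β' : ℝ} {f g : ℝ → ℝ}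

lemma convolution (hf : HasExpMoments m w β f) (hg : HasExpMoments m' w' β' g) (hfw : IsWeight f)
    (hgw : IsWeight g) : HasExpMoments (m + m') (w + w') (β + β') (f ⋆ g) where
  integrable_exp_mul l hl := by
    simp only [exp_mul_convolution]
    exact (hf.integrable_exp_mul l hl).integrable_convolution _ (hg.integrable_exp_mul l hl)
  integral_exp_mul_le l hl := by
    simp only [exp_mul_convolution]
    rw [integral_convolution _ (hf.integrable_exp_mul l hl) (hg.integrable_exp_mul l hl),
      hfw.integral_convolution hgw]
    calc _ ≤ (∫ x, f x) * exp (l * m + w * l ^ 2 + β) *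
          ((∫ x, g x) * exp (l * m' + w' * l ^ 2 + β')) :=
          mul_le_mul (hf.integral_exp_mul_le l hl) (hg.integral_exp_mul_le l hl)
            (integral_nonneg fun x => (mul_pos (exp_pos _) (hgw.pos x)).le)
            (mul_pos hfw.integral_pos (exp_pos _)).le
      _ = _ := by
        rw [mul_mul_mul_comm, ← exp_add]
        ring_nf

lemma mono (hg : HasExpMoments m w β g) (hgw : IsWeight g) (hβ : β ≤ β') :
    HasExpMoments m w β' g where
  integrable_exp_mul := hg.integrable_exp_mul
  integral_exp_mul_le l hl := by
    have := hgw.integral_pos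
    refine (hg.integral_exp_mul_le l hl).trans ?_
    gcongr

lemma nonneg (hg : HasExpMoments m w β g) (hgw : IsWeight g) : 0 ≤ β := by
  have := hg.integral_exp_mul_le 0 (by simp)
  simpa [hgw.integral_pos] using this

lemma integral_exp_mul_sub_le (hg : HasExpMoments m w β g) {l : ℝ} (hl : |l| ≤ 1) :
    Integrable (fun x => exp (l * (x - m)) * g x) ∧
      ∫ x, exp (l * (x - m)) * g x ≤ (∫ x, g x) * exp (w * l ^ 2 + β) := by
  have recentre (x : ℝ) : exp (l * (x - m)) * g x = exp (-(l * m)) * (exp (l * x) * g x) := by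
    rw [← mul_assoc, ← exp_add]; ring_nf
  simp only [recentre, integral_const_mul]
  refine ⟨(hg.integrable_exp_mul l hl).const_mul _, ?_⟩
  calc _ ≤ exp (-(l * m)) * ((∫ x, g x) * exp (l * m + w * l ^ 2 + β)) := by
        gcongr; exact hg.integral_exp_mul_le l hl
    _ = _ := by rw [mul_left_comm, ← exp_add]; ring_nf

lemma setIntegral_compl_closedBall_le (hg : HasExpMoments m w β g) (hgw : IsWeight g) {s : ℝ}
    (hs : 1 ≤ s) (R : ℝ) :
    ∫ x in (Metric.closedBall m (R * s))ᶜ, g x ≤ 2 * exp (w / s ^ 2 + β - R) * ∫ x, g x := by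
  have hs₀ : 0 < s := one_pos.trans_le hs
  have abs_inv : |s⁻¹| ≤ 1 := by rw [abs_inv, abs_of_pos hs₀]; exact inv_le_one_of_one_le₀ hs
  obtain ⟨int_right, le_right⟩ := hg.integral_exp_mul_sub_le abs_inv
  obtain ⟨int_left, le_left⟩ := hg.integral_exp_mul_sub_le (abs_neg s⁻¹ ▸ abs_inv)
  have markov : ∀ x ∈ (Metric.closedBall m (R * s))ᶜ,
      g x ≤ exp (-R) * (exp (s⁻¹ * (x - m)) * g x + exp (-s⁻¹ * (x - m)) * g x) := by
    intro x hx
    rw [Set.mem_compl_iff, Metric.mem_closedBall, dist_eq, not_le, ← lt_div_iff₀ hs₀] at hx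
    have one_le := one_le_exp_neg_mul_exp_add_exp_neg (y := s⁻¹ * (x - m)) (R := R)
      (by rw [inv_mul_eq_div, abs_div, abs_of_pos hs₀]; exact hx.le)
    rw [← neg_mul] at one_le
    rw [← add_mul, ← mul_assoc]
    exact le_mul_of_one_le_left (hgw.pos x).le one_le
  have int_sum := (int_right.add int_left).const_mul (exp (-R))
  calc _ ≤ ∫ x in (Metric.closedBall m (R * s))ᶜ,
          exp (-R) * (exp (s⁻¹ * (x - m)) * g x + exp (-s⁻¹ * (x - m)) * g x) :=
        setIntegral_mono_on hgw.integrable.integrableOn int_sum.integrableOn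
          Metric.isClosed_closedBall.measurableSet.compl markov
    _ ≤ ∫ x, exp (-R) * (exp (s⁻¹ * (x - m)) * g x + exp (-s⁻¹ * (x - m)) * g x) := by
        refine setIntegral_le_integral int_sum (ae_of_all _ fun x => ?_)
        have := hgw.pos x
        simp only [Pi.zero_apply]; positivity
    _ = exp (-R) * ((∫ x, exp (s⁻¹ * (x - m)) * g x) + ∫ x, exp (-s⁻¹ * (x - m)) * g x) := by
        rw [integral_const_mul, integral_add int_right int_left]
    _ ≤ exp (-R) * ((∫ x, g x) * exp (w / s ^ 2 + β) + (∫ x, g x) * exp (w / s ^ 2 + β)) := by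
        rw [neg_sq, inv_pow, ← div_eq_mul_inv] at *
        gcongr
    _ = _ := by rw [show w / s ^ 2 + β - R = -R + (w / s ^ 2 + β) by ring, exp_add (-R)]; ring

-- By the exponential moments at least half of the mass lies within distance `R s` of `m`.
lemma exists_integral_le_mul (hg : HasExpMoments m w β g) (hgw : IsWeight g) {s R : ℝ} (hs : 1 ≤ s)
    (hR : 0 < R) (hRβ : w / s ^ 2 + β + 2 ≤ R) :
    ∃ z, |z - m| ≤ R * s ∧ ∫ x, g x ≤ 4 * R * s * g z := by
  have hRs : 0 < R * s := by positivity
  have tail_le : ∫ x in (Metric.closedBall m (R * s))ᶜ, g x ≤ (∫ x, g x) / 2 := by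
    have four_le : 4 ≤ exp 2 := by
      have := exp_one_gt_d9
      rw [show (2 : ℝ) = 1 + 1 by norm_num, exp_add]
      nlinarith
    have small : exp (w / s ^ 2 + β - R) ≤ 1 / 4 :=
      calc _ ≤ exp (-2) := exp_le_exp.2 (by linarith)
        _ ≤ 1 / 4 := by rw [exp_neg, ← one_div]; gcongr
    have := mul_le_mul_of_nonneg_right small hgw.integral_pos.le
    linarith [hg.setIntegral_compl_closedBall_le hgw hs R]
  obtain ⟨z, hz, average_le⟩ := exists_setAverage_le (μ := volume)
    (s := Metric.closedBall m (R * s)) (by simpa using hRs)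
    (by rw [volume_closedBall]; exact ENNReal.ofReal_ne_top) hgw.integrable.integrableOn
  refine ⟨z, by simpa [dist_eq] using hz, ?_⟩
  rw [setAverage_eq, volume_real_closedBall hRs.le, smul_eq_mul, inv_mul_le_iff₀ (by positivity)]
    at average_le
  have := integral_add_compl (μ := volume) (s := Metric.closedBall m (R * s))
    Metric.isClosed_closedBall.measurableSet hgw.integrable
  linarith

end HasExpMoments

/-! ### Local limit estimates for sums of many bonds -/

/-- `g` resembles an `n`-fold convolution of densities `exp (-φ)` with `φ'' ≤ κ` and mean about `A`:
both its semi-log-convexity and its exponential moments are those of a sum of `n` such bonds, up to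
the factor `exp β` accounting for the deviations of the single bonds. -/
structure IsBulk (κ C A : ℝ) (n : ℕ) (β : ℝ) (g : ℝ → ℝ) : Prop
    extends SemiLogConvex (n / κ) g, HasExpMoments (n * A) (n * C) β g

namespace IsBulk

variable {κ C A β β' B : ℝ} {n m : ℕ} {f g : ℝ → ℝ}

lemma convolution (hf : IsBulk κ C A n β f) (hg : IsBulk κ C A m β' g) :
    IsBulk κ C A (n + m) (β + β') (f ⋆ g) where
  toSemiLogConvex := by
    simpa only [Nat.cast_add, add_div] using hf.toSemiLogConvex.convolution hg.toSemiLogConvex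
  toHasExpMoments := by
    simpa only [Nat.cast_add, add_mul] using
      hf.toHasExpMoments.convolution hg.toHasExpMoments hf.toIsWeight hg.toIsWeight

lemma mono (hg : IsBulk κ C A n β g) (hβ : β ≤ β') : IsBulk κ C A n β' g where
  toSemiLogConvex := hg.toSemiLogConvex
  toHasExpMoments := hg.toHasExpMoments.mono hg.toIsWeight hβ

lemma one_le_card (hg : IsBulk κ C A n β g) : (1 : ℝ) ≤ n := by
  rw [Nat.one_le_cast, Nat.one_le_iff_ne_zero]
  rintro rfl
  simpa using hg.var_pos

lemma modulus_pos (hg : IsBulk κ C A n β g) : 0 < κ :=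
  (div_pos_iff_of_pos_left (one_pos.trans_le hg.one_le_card)).1 hg.var_pos

lemma exists_integral_div_le (κ C A B K : ℝ) : ∃ D, ∀ {n : ℕ} {g : ℝ → ℝ},
    IsBulk κ C A n B g → ∀ x, |x - n * A| ≤ K →
      (∫ y, g y) / √(2 * π * (n / κ)) ≤ D * g x := by
  set R := |C| + |B| + 2
  refine ⟨8 * R ^ 2 * κ * exp (κ * (R + K) ^ 2) / π, fun {n g} hg x hx => ?_⟩
  have hκ := hg.modulus_pos
  have hn := hg.one_le_card
  have hs := one_le_sqrt.2 hn
  obtain ⟨z, hz, le_z⟩ := hg.exists_integral_le_mul hg.toIsWeight hs (R := R) (by positivity) (by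
    rw [sq_sqrt (by positivity), mul_div_cancel_left₀ C (by positivity)]
    linarith [le_abs_self C, le_abs_self B])
  have dist_le : |x - z| ≤ (R + K) * √n := by
    have := le_mul_of_one_le_right ((abs_nonneg _).trans hx) hs
    linarith [abs_sub_le x (n * A) z, abs_sub_comm z (n * A)]
  have sq_div_le : (x - z) ^ 2 / (n / κ) ≤ κ * (R + K) ^ 2 := by
    rw [div_le_iff₀ hg.var_pos]
    calc _ = |x - z| ^ 2 := (sq_abs _).symm
      _ ≤ ((R + K) * √n) ^ 2 := by gcongr
      _ = _ := by rw [mul_pow, sq_sqrt (by positivity)]; field_simp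
  refine (hg.integral_div_le le_z sq_div_le).trans_eq ?_
  rw [mul_pow _ (√(n : ℝ)), sq_sqrt (by positivity)]
  field_simp
  ring

-- The increment of `log g` is repeated about `√n` times.
lemma log_sub_log_le_div_sqrt (hg : IsBulk κ C A n β g) {D x : ℝ}
    (hx : (∫ y, g y) / √(2 * π * (n / κ)) ≤ D * g x) (t : ℝ) :
    log (g (x + t)) - log (g x) ≤ (|log D| + κ * t ^ 2) / √n := by
  have hκ := hg.modulus_pos
  have hn := hg.one_le_card
  have hs : 0 < √(n : ℝ) := by positivity
  have sup_pos : 0 < (∫ y, g y) / √(2 * π * (n / κ)) := div_pos hg.integral_pos (by positivity)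
  have D_pos : 0 < D := pos_of_mul_pos_left (sup_pos.trans_le hx) (hg.pos x).le
  set k := ⌈√(n : ℝ)⌉₊
  have k_ge : √(n : ℝ) ≤ k := Nat.le_ceil _
  have k_le : (k : ℝ) ≤ 2 * √n := by
    linarith [Nat.ceil_lt_add_one hs.le, one_le_sqrt.2 hn]
  have log_le : log ((∫ y, g y) / √(2 * π * (n / κ))) - log (g x) ≤ |log D| := by
    have := log_le_log sup_pos hx
    rw [log_mul D_pos.ne' (hg.pos x).ne'] at this
    linarith [le_abs_self (log D)]
  calc _ ≤ _ := hg.log_sub_log_le x t (Nat.ceil_pos.2 hs)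
    _ ≤ |log D| / √n + 2 * √n * (t ^ 2 / (2 * (n / κ))) := by
        gcongr
    _ = _ := by
        rw [add_div]
        congr 1
        field_simp
        rw [sq_sqrt (by positivity), mul_comm]

section Limit

variable {ι : Type*} {l : Filter ι} {N : ι → ℕ} {F : ι → ℝ → ℝ} {x : ι → ℝ} {K : ℝ}

lemma tendsto_log_sub_log (hF : ∀ᶠ i in l, IsBulk κ C A (N i) B (F i)) (hN : Tendsto N l atTop)
    (hx : ∀ i, |x i - N i * A| ≤ K) (t : ℝ) :
    Tendsto (fun i => log (F i (x i - t)) - log (F i (x i))) l (nhds 0) := by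
  obtain ⟨D, hD⟩ := exists_integral_div_le κ C A B (K + |t|)
  have rate_zero : Tendsto (fun i => (|log D| + κ * t ^ 2) / √(N i)) l (nhds 0) :=
    ((tendsto_sqrt_atTop.comp tendsto_natCast_atTop_atTop).comp hN).const_div_atTop _
  refine squeeze_zero_norm' ?_ rate_zero
  filter_upwards [hF] with i hi
  have forward := hi.log_sub_log_le_div_sqrt
    (hD hi (x i) ((hx i).trans (by linarith [abs_nonneg t]))) (-t)
  have backward := hi.log_sub_log_le_div_sqrt (hD hi (x i - t) (by
    rw [sub_right_comm]
    exact (abs_sub _ _).trans (by linarith [hx i]))) t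
  rw [neg_sq, ← sub_eq_add_neg] at forward
  rw [sub_add_cancel] at backward
  exact abs_le.2 ⟨by linarith, forward⟩

variable [l.IsCountablyGenerated]

-- A single extra factor `f` sees the bulk `F i` as locally constant, so only its mass survives.
theorem tendsto_convolution_div (hf : IsWeight f) (hF : ∀ᶠ i in l, IsBulk κ C A (N i) B (F i))
    (hN : Tendsto N l atTop) (hx : ∀ i, |x i - N i * A| ≤ K) :
    Tendsto (fun i => (f ⋆ F i) (x i) / F i (x i)) l (nhds (∫ y, f y)) := by
  obtain ⟨D, hD⟩ := exists_integral_div_le κ C A B K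
  have convolution_div (i : ι) :
      (f ⋆ F i) (x i) / F i (x i) = ∫ y, f y * (F i (x i - y) / F i (x i)) := by
    simp only [convolution_lsmul, smul_eq_mul, ← integral_div, mul_div_assoc]
  simp only [convolution_div]
  refine tendsto_integral_filter_of_dominated_convergence (fun y => f y * D) ?_ ?_
    (hf.integrable.mul_const D) (ae_of_all _ fun y => ?_)
  · filter_upwards [hF] with i hi
    exact (hf.continuous.mul ((hi.continuous.comp
      (continuous_const.sub continuous_id)).div_const _)).aestronglyMeasurable
  · filter_upwards [hF] with i hi
    refine ae_of_all _ fun y => ?_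
    have ratio_le : F i (x i - y) / F i (x i) ≤ D := by
      have := hi.var_pos
      rw [div_le_iff₀ (hi.pos _)]
      refine le_trans ?_ (hD hi (x i) (hx i))
      rw [le_div_iff₀ (by positivity)]
      exact hi.mul_sqrt_le_integral _
    rw [norm_of_nonneg (mul_pos (hf.pos y) (div_pos (hi.pos _) (hi.pos _))).le]
    exact mul_le_mul_of_nonneg_left ratio_le (hf.pos y).le
  · have ratio_one : Tendsto (fun i => F i (x i - y) / F i (x i)) l (nhds 1) := by
      rw [← exp_zero]
      refine ((continuous_exp.tendsto 0).comp (tendsto_log_sub_log hF hN hx y)).congr' ?_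
      filter_upwards [hF] with i hi
      rw [Function.comp_apply, ← log_div (hi.pos _).ne' (hi.pos _).ne',
        exp_log (div_pos (hi.pos _) (hi.pos _))]
    simpa only [mul_one] using ratio_one.const_mul (f y)

end Limit

end IsBulk

/-! ### Exchanging the factors of a long convolution -/

/-- The convolution `f ⋆ q 0 ⋆ ⋯ ⋆ q (n - 1)`: the density of the sum of the `n + 1` increments of a
chain, the first of which may be defective. -/
def chain (f : ℝ → ℝ) (q : ℕ → ℝ → ℝ) : ℕ → ℝ → ℝ
  | 0 => f
  | n + 1 => chain f q n ⋆ q n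

/-- The convolution of `n + 1 - k` copies of `p` with `q 0, …, q (k - 1)`, for `k ≤ n`; raising `k`
interpolates between a homogeneous and an inhomogeneous chain. -/
def hybrid (p : ℝ → ℝ) (q : ℕ → ℝ → ℝ) (n k : ℕ) : ℝ → ℝ :=
  chain (chain p (fun _ => p) (n - k)) q k

section Chain

variable {κ C A : ℝ} {f g p : ℝ → ℝ} {q : ℕ → ℝ → ℝ} {β : ℕ → ℝ}

lemma IsWeight.chain (hf : IsWeight f) (hq : ∀ i, IsBddWeight (q i)) (n : ℕ) :
    IsWeight (chain f q n) := by
  induction n with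
  | zero => exact hf
  | succ n ih => exact (ih.convolution (hq n)).toIsWeight

lemma IsBddWeight.chain (hf : IsBddWeight f) (hq : ∀ i, IsBddWeight (q i)) (n : ℕ) :
    IsBddWeight (chain f q n) := by
  induction n with
  | zero => exact hf
  | succ n ih => exact ih.convolution (hq n)

lemma IsBulk.chain {m : ℕ} {β₀ : ℝ} (hf : IsBulk κ C A m β₀ f)
    (hq : ∀ i, IsBulk κ C A 1 (β i) (q i)) (n : ℕ) :
    IsBulk κ C A (m + n) (β₀ + ∑ i ∈ Finset.range n, β i) (chain f q n) := by
  induction n with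
  | zero => simpa [_root_.chain] using hf
  | succ n ih =>
    rw [Finset.sum_range_succ, ← add_assoc, ← add_assoc]
    exact ih.convolution (hq n)

lemma chain_convolution (hf : IsWeight f) (hg : IsBddWeight g) (hq : ∀ i, IsBddWeight (q i))
    (n : ℕ) : chain (f ⋆ g) q n = f ⋆ chain g q n := by
  induction n with
  | zero => rfl
  | succ n ih =>
    simp only [chain]
    rw [ih, hf.convolution_assoc (hg.chain hq n) (hq n)]

lemma chain_succ (hf : IsWeight f) (hq : ∀ i, IsBddWeight (q i)) (n : ℕ) :
    chain f q (n + 1) = f ⋆ chain (q 0) (fun i => q (i + 1)) n := by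
  induction n with
  | zero => rfl
  | succ n ih =>
    rw [chain, ih, hf.convolution_assoc ((hq 0).chain (fun i => hq (i + 1)) n) (hq (n + 1))]
    rfl

lemma hybrid_succ_succ (p : ℝ → ℝ) (q : ℕ → ℝ → ℝ) (n k : ℕ) :
    hybrid p q (n + 1) (k + 1) = hybrid p q n k ⋆ q k := by
  simp only [hybrid, chain, Nat.succ_sub_succ]

lemma hybrid_succ (hp : IsBddWeight p) (hq : ∀ i, IsBddWeight (q i)) {n k : ℕ} (hk : k ≤ n) :
    hybrid p q (n + 1) k = p ⋆ hybrid p q n k := by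
  rw [hybrid, Nat.succ_sub hk, chain_succ hp.toIsWeight fun _ => hp,
    chain_convolution hp.toIsWeight (hp.chain (fun _ => hp) _) hq]
  rfl

lemma isBulk_hybrid (hp : IsBulk κ C A 1 0 p) (hq : ∀ i, IsBulk κ C A 1 (β i) (q i)) {n k : ℕ}
    (hk : k ≤ n) : IsBulk κ C A (n + 1) (∑ i ∈ Finset.range k, β i) (hybrid p q n k) := by
  have := (hp.chain (β := 0) (fun _ => hp) (n - k)).chain hq k
  rw [show 1 + (n - k) + k = n + 1 by omega] at this
  simpa [hybrid] using this

end Chain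

section Exchange

variable {κ C A : ℝ} {f g p q : ℝ → ℝ}

lemma convolution_sub_convolution_le {v : ℝ} (hp : IsWeight p) (hq : IsWeight q)
    (hg : SemiLogConvex v g) (x : ℝ) :
    (q ⋆ g) x - (p ⋆ g) x ≤ (∫ y, |q y - p y|) * ((∫ y, g y) / √(2 * π * v)) := by
  have hv := hg.var_pos
  have int_q := hq.integrable_mul hg.toIsBddWeight x
  have int_p := hp.integrable_mul hg.toIsBddWeight x
  simp only [convolution_lsmul, smul_eq_mul]
  rw [← integral_sub int_q int_p, ← integral_mul_const]
  refine integral_mono (int_q.sub int_p) ((hq.integrable.sub hp.integrable).abs.mul_const _)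
    fun y => ?_
  simp only [← sub_mul]
  refine mul_le_mul (le_abs_self _) ?_ (hg.pos _).le (abs_nonneg _)
  rw [le_div_iff₀ (by positivity)]
  exact hg.mul_sqrt_le_integral _

lemma log_convolution_sub_log_convolution_le {n : ℕ} {β D x : ℝ} (hp : IsWeight p)
    (hq : IsWeight q) (hg : IsBulk κ C A n β g)
    (hx : (∫ y, (p ⋆ g) y) / √(2 * π * ((n + 1 : ℕ) / κ)) ≤ D * (p ⋆ g) x) :
    log ((q ⋆ g) x) - log ((p ⋆ g) x) ≤ 2 * D * ((∫ y, p y)⁻¹ * ∫ y, |q y - p y|) := by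
  have hκ := hg.modulus_pos
  have hn := hg.one_le_card
  have pg_pos := (hp.convolution hg.toIsBddWeight).pos x
  have qg_pos := (hq.convolution hg.toIsBddWeight).pos x
  have mass_pos := hp.integral_pos
  have sqrt_le : √(2 * π * ((n + 1 : ℕ) / κ)) ≤ 2 * √(2 * π * (n / κ)) := by
    rw [sqrt_le_left (by positivity), mul_pow, sq_sqrt (by positivity)]
    calc 2 * π * ((n + 1 : ℕ) / κ) ≤ 2 * π * ((2 ^ 2 * n) / κ) := by
          gcongr; push_cast; linarith
      _ = _ := by ring
  have sup_le : (∫ y, g y) / √(2 * π * (n / κ)) ≤ 2 * D * ((∫ y, p y)⁻¹ * (p ⋆ g) x) :=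
    calc _ ≤ (∫ y, g y) / (√(2 * π * ((n + 1 : ℕ) / κ)) / 2) := by
          have := hg.integral_pos
          gcongr
          linarith
      _ = 2 * (∫ y, p y)⁻¹ * ((∫ y, (p ⋆ g) y) / √(2 * π * ((n + 1 : ℕ) / κ))) := by
          rw [hp.integral_convolution hg.toIsWeight]
          field_simp
      _ ≤ 2 * (∫ y, p y)⁻¹ * (D * (p ⋆ g) x) := by gcongr
      _ = _ := by ring
  rw [← log_div qg_pos.ne' pg_pos.ne']
  refine (log_le_sub_one_of_pos (div_pos qg_pos pg_pos)).trans ?_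
  rw [div_sub_one pg_pos.ne', div_le_iff₀ pg_pos]
  calc _ ≤ _ := convolution_sub_convolution_le hp hq hg.toSemiLogConvex x
    _ ≤ (∫ y, |q y - p y|) * (2 * D * ((∫ y, p y)⁻¹ * (p ⋆ g) x)) := by gcongr
    _ = _ := by ring

end Exchange

section Telescope

variable {κ C A : ℝ} {f p : ℝ → ℝ} {q : ℕ → ℝ → ℝ} {β : ℕ → ℝ}

lemma bddAbove_inv_integral (hp : IsWeight p) (hq : ∀ k, IsWeight (q k))
    (hqp : Summable fun k => ∫ y, |q k y - p y|) :
    BddAbove (Set.range fun k => (∫ y, q k y)⁻¹) := by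
  have mass_tendsto : Tendsto (fun k => ∫ y, q k y) atTop (nhds (∫ y, p y)) := by
    refine tendsto_iff_norm_sub_tendsto_zero.2 (squeeze_zero_norm (fun k => ?_)
      hqp.tendsto_atTop_zero)
    rw [norm_norm, ← integral_sub (hq k).integrable hp.integrable]
    exact norm_integral_le_integral_norm _
  exact (mass_tendsto.inv₀ hp.integral_pos.ne').bddAbove_range

lemma exists_abs_log_hybrid_sub_le (hp : IsBulk κ C A 1 0 p)
    (hq : ∀ k, IsBulk κ C A 1 (β k) (q k)) (hβ : Summable β)
    (hqp : Summable fun k => ∫ y, |q k y - p y|) :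
    ∃ M, ∀ n k, k ≤ n → |log (hybrid p q (n + 1) (k + 1) ((n + 2) * A)) -
      log (hybrid p q (n + 1) k ((n + 2) * A))| ≤ M * ∫ y, |q k y - p y| := by
  have hqw (k : ℕ) := (hq k).toIsWeight
  obtain ⟨D, hD⟩ := IsBulk.exists_integral_div_le κ C A (∑' k, β k) 0
  obtain ⟨m, hm⟩ := bddAbove_inv_integral hp.toIsWeight hqw hqp
  refine ⟨2 * |D| * (m + (∫ y, p y)⁻¹), fun n k hk => ?_⟩
  have partial_le (j : ℕ) : ∑ i ∈ Finset.range j, β i ≤ ∑' k, β k :=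
    hβ.sum_le_tsum _ fun k _ => (hq k).nonneg (hqw k)
  have lower {j : ℕ} (hj : j ≤ n + 1) := hD ((isBulk_hybrid hp hq hj).mono (partial_le j))
    ((n + 2) * A) (by push_cast; ring_nf; simp)
  have lower_p := lower (hk.trans n.le_succ)
  have lower_q := lower (Nat.succ_le_succ hk)
  rw [hybrid_succ_succ, convolution_comm] at lower_q ⊢
  rw [hybrid_succ hp.toIsBddWeight (fun i => (hq i).toIsBddWeight) hk] at lower_p ⊢
  have bulk := isBulk_hybrid hp hq hk
  have up := log_convolution_sub_log_convolution_le hp.toIsWeight (hqw k) bulk lower_p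
  have down := log_convolution_sub_log_convolution_le (hqw k) hp.toIsWeight bulk lower_q
  simp only [abs_sub_comm (p _)] at down
  have hqm : (∫ y, q k y)⁻¹ ≤ m := hm ⟨k, rfl⟩
  have dist_nonneg : 0 ≤ ∫ y, |q k y - p y| := integral_nonneg fun _ => abs_nonneg _
  have p_inv := inv_nonneg.2 hp.integral_pos.le
  have q_inv := inv_nonneg.2 (hqw k).integral_pos.le
  have widen {u : ℝ} (hu : 0 ≤ u) (hum : u ≤ m + (∫ y, p y)⁻¹) :
      2 * D * (u * ∫ y, |q k y - p y|) ≤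
        2 * |D| * (m + (∫ y, p y)⁻¹) * ∫ y, |q k y - p y| := by
    rw [mul_assoc (2 * |D|)]
    gcongr
    exact le_abs_self D
  exact abs_le.2 ⟨by linarith [widen q_inv (by linarith)], by linarith [widen p_inv (by linarith)]⟩

lemma tendsto_log_hybrid_sub (hp : IsBulk κ C A 1 0 p) (hq : ∀ k, IsBulk κ C A 1 (β k) (q k))
    (k : ℕ) : Tendsto (fun n : ℕ => log (hybrid p q (n + 1) (k + 1) ((n + 2) * A)) -
      log (hybrid p q (n + 1) k ((n + 2) * A))) atTop
      (nhds (log (∫ y, q k y) - log (∫ y, p y))) := by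
  have bulk : ∀ᶠ n in atTop, IsBulk κ C A (n + 1) (∑ i ∈ Finset.range k, β i) (hybrid p q n k) :=
    (eventually_ge_atTop k).mono fun n hn => isBulk_hybrid hp hq hn
  have ratio_tendsto {f : ℝ → ℝ} (hf : IsWeight f) := IsBulk.tendsto_convolution_div hf bulk
    (tendsto_add_atTop_nat 1) (x := fun n : ℕ => (n + 2) * A) (K := |A|)
    (fun n => by push_cast; ring_nf; rfl)
  have hqw := (hq k).toIsWeight
  refine (((ratio_tendsto hqw).log hqw.integral_pos.ne').sub
    ((ratio_tendsto hp.toIsWeight).log hp.integral_pos.ne')).congr' ?_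
  filter_upwards [eventually_ge_atTop k, bulk] with n hn hbulk
  have ratio_log {f : ℝ → ℝ} (hf : IsWeight f) := log_div
    ((hf.convolution hbulk.toIsBddWeight).pos ((n + 2) * A)).ne' (hbulk.pos ((n + 2) * A)).ne'
  rw [hybrid_succ_succ, convolution_comm (hybrid p q n k),
    hybrid_succ hp.toIsBddWeight (fun i => (hq i).toIsBddWeight) hn, ratio_log hqw,
    ratio_log hp.toIsWeight, sub_sub_sub_cancel_right]

lemma tendsto_log_chain_sub_homogeneous (hp : IsBulk κ C A 1 0 p)
    (hq : ∀ k, IsBulk κ C A 1 (β k) (q k)) (hβ : Summable β)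
    (hqp : Summable fun k => ∫ y, |q k y - p y|) :
    Tendsto (fun n : ℕ => log (chain p q (n + 1) ((n + 2) * A)) -
      log (chain p (fun _ => p) (n + 1) ((n + 2) * A))) atTop
      (nhds (∑' k, (log (∫ y, q k y) - log (∫ y, p y)))) := by
  obtain ⟨M, hM⟩ := exists_abs_log_hybrid_sub_le hp hq hβ hqp
  set exchange : ℕ → ℕ → ℝ := fun n k => log (hybrid p q (n + 1) (k + 1) ((n + 2) * A)) -
    log (hybrid p q (n + 1) k ((n + 2) * A))
  have telescope (n : ℕ) : log (chain p q (n + 1) ((n + 2) * A)) -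
      log (chain p (fun _ => p) (n + 1) ((n + 2) * A)) =
      ∑' k, if k < n + 1 then exchange n k else 0 := by
    rw [tsum_eq_sum (s := Finset.range (n + 1)) fun k hk => if_neg (by simpa using hk),
      Finset.sum_congr rfl fun k hk => if_pos (Finset.mem_range.1 hk),
      Finset.sum_range_sub fun k => log (hybrid p q (n + 1) k ((n + 2) * A))]
    simp only [hybrid, Nat.sub_self, Nat.sub_zero, chain]
  simp only [telescope]
  refine tendsto_tsum_of_dominated_convergence (bound := fun k => |M| * ∫ y, |q k y - p y|)
    (hqp.mul_left _) (fun k => ?_) (Eventually.of_forall fun n k => ?_)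
  · refine (tendsto_log_hybrid_sub hp hq k).congr' ?_
    filter_upwards [eventually_ge_atTop k] with n hn
    rw [if_pos (Nat.lt_succ_of_le hn)]
  · have dist_nonneg : 0 ≤ ∫ y, |q k y - p y| := integral_nonneg fun _ => abs_nonneg _
    split_ifs with hk
    · exact (hM n k (Nat.le_of_lt_succ hk)).trans (by gcongr; exact le_abs_self M)
    · rw [norm_zero]; positivity

lemma tendsto_log_chain_sub_head (hf : IsWeight f) (hp : IsWeight p)
    (hq : ∀ k, IsBulk κ C A 1 (β k) (q k)) (hβ : Summable β) :
    Tendsto (fun n : ℕ => log (chain f q (n + 1) ((n + 2) * A)) -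
      log (chain p q (n + 1) ((n + 2) * A))) atTop (nhds (log (∫ y, f y) - log (∫ y, p y))) := by
  have hqb (k : ℕ) : IsBddWeight (q k) := (hq k).toIsBddWeight
  set tail : ℕ → ℝ → ℝ := fun n => chain (q 0) (fun i => q (i + 1)) n
  have bulk (n : ℕ) : IsBulk κ C A (n + 1) (∑' k, β k) (tail n) := by
    rw [add_comm n]
    refine ((hq 0).chain (fun i => hq (i + 1)) n).mono ?_
    rw [add_comm, ← Finset.sum_range_succ' β]
    exact hβ.sum_le_tsum _ fun k _ => (hq k).nonneg (hq k).toIsWeight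
  have log_ratio_tendsto {r : ℝ → ℝ} (hr : IsWeight r) := (IsBulk.tendsto_convolution_div hr
    (Eventually.of_forall bulk) (tendsto_add_atTop_nat 1) (x := fun n : ℕ => (n + 2) * A)
    (K := |A|) (fun n => by push_cast; ring_nf; rfl)).log hr.integral_pos.ne'
  refine ((log_ratio_tendsto hf).sub (log_ratio_tendsto hp)).congr fun n => ?_
  have log_ratio {r : ℝ → ℝ} (hr : IsWeight r) := log_div
    ((hr.convolution (bulk n).toIsBddWeight).pos ((n + 2) * A)).ne' ((bulk n).pos ((n + 2) * A)).ne'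
  rw [chain_succ hf hqb, chain_succ hp hqb, log_ratio hf, log_ratio hp, sub_sub_sub_cancel_right]

theorem tendsto_log_chain_sub (hf : IsWeight f) (hp : IsBulk κ C A 1 0 p)
    (hq : ∀ k, IsBulk κ C A 1 (β k) (q k)) (hβ : Summable β)
    (hqp : Summable fun k => ∫ y, |q k y - p y|) :
    Tendsto (fun n : ℕ => log (chain f q (n + 1) ((n + 2) * A)) -
      log (chain p (fun _ => p) (n + 1) ((n + 2) * A))) atTop
      (nhds (log (∫ y, f y) - log (∫ y, p y) + ∑' k, (log (∫ y, q k y) - log (∫ y, p y)))) := by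
  simpa only [sub_add_sub_cancel] using (tendsto_log_chain_sub_head hf hp.toIsWeight hq hβ).add
    (tendsto_log_chain_sub_homogeneous hp hq hβ hqp)

end Telescope

/-! ### Strong convexity and the Legendre transform -/

lemma add_mul_add_sq_le_of_strongConvexOn {f : ℝ → ℝ} {m f' x : ℝ}
    (hf : StrongConvexOn Set.univ m f) (hx : HasDerivAt f f' x) (y : ℝ) :
    f x + f' * (y - x) + m / 2 * (y - x) ^ 2 ≤ f y := by
  have convex := strongConvexOn_iff_convex.1 hf
  simp only [norm_eq_abs, sq_abs] at convex
  have deriv_sub : HasDerivAt (fun z => f z - m / 2 * z ^ 2) (f' - m * x) x :=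
    (hx.sub ((hasDerivAt_pow 2 x).const_mul (m / 2))).congr_deriv (by norm_num; ring)
  rcases lt_trichotomy x y with lt | rfl | lt
  · have := convex.le_slope_of_hasDerivAt trivial trivial lt deriv_sub
    rw [slope_def_field, le_div_iff₀ (sub_pos.2 lt)] at this
    linarith
  · simp
  · have := convex.slope_le_of_hasDerivAt trivial trivial lt deriv_sub
    rw [slope_def_field, div_le_iff₀ (sub_pos.2 lt)] at this
    linarith

lemma surjective_deriv_of_strongConvexOn {f : ℝ → ℝ} {m : ℝ} (hm : 0 < m)
    (hf : StrongConvexOn Set.univ m f) (hC : ContDiff ℝ 1 f) : Function.Surjective (deriv f) := by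
  have hasDerivAt (x : ℝ) := (hC.differentiable one_ne_zero x).hasDerivAt
  have growth (t : ℝ) : m * t * t ≤ (deriv f t - deriv f 0) * t := by
    linarith [add_mul_add_sq_le_of_strongConvexOn hf (hasDerivAt 0) t,
      add_mul_add_sq_le_of_strongConvexOn hf (hasDerivAt t) 0]
  refine (hC.continuous_deriv le_rfl).surjective ?_ ?_
  · refine tendsto_atTop_mono' _ ?_
      (tendsto_atTop_add_const_left _ (deriv f 0) (tendsto_id.const_mul_atTop hm))
    filter_upwards [eventually_gt_atTop 0] with t ht
    simp only [id_eq]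
    linarith [le_of_mul_le_mul_right (growth t) ht]
  · refine tendsto_atBot_mono' _ ?_
      (tendsto_atBot_add_const_left _ (deriv f 0) (tendsto_id.const_mul_atBot hm))
    filter_upwards [eventually_lt_atBot 0] with t ht
    simp only [id_eq]
    linarith [(mul_le_mul_right_of_neg ht).1 (growth t)]

lemma convexOn_log_integral_exp {E α : Type*} [AddCommGroup E] [Module ℝ E] [MeasurableSpace α]
    {μ : Measure α} [NeZero μ] {S : Set E} {F : E → α → ℝ} (hS : Convex ℝ S)
    (hF : ∀ z, ConvexOn ℝ S fun x => F x z)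
    (hint : ∀ x ∈ S, Integrable (fun z => exp (F x z)) μ) :
    ConvexOn ℝ S fun x => log (∫ z, exp (F x z) ∂μ) := by
  refine ⟨hS, fun x hx y hy a b ha hb hab => ?_⟩
  set X := ∫ z, exp (F x z) ∂μ with hX
  set Y := ∫ z, exp (F y z) ∂μ with hY
  have X_pos : 0 < X := integral_exp_pos (hint x hx)
  have Y_pos : 0 < Y := integral_exp_pos (hint y hy)
  have hint' := hint _ (hS hx hy ha hb hab)
  have pointwise (z : α) : exp (F (a • x + b • y) z) ≤
      exp (a * log X + b * log Y) * (a * (exp (F x z) / X) + b * (exp (F y z) / Y)) := by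
    have convex := convexOn_exp.2 (Set.mem_univ (F x z - log X)) (Set.mem_univ (F y z - log Y))
      ha hb hab
    simp only [exp_sub, exp_log X_pos, exp_log Y_pos, smul_eq_mul] at convex
    calc _ ≤ exp (a * F x z + b * F y z) := exp_le_exp.2 ((hF z).2 hx hy ha hb hab)
      _ = exp (a * log X + b * log Y) * exp (a * (F x z - log X) + b * (F y z - log Y)) := by
        rw [← exp_add]; ring_nf
      _ ≤ _ := mul_le_mul_of_nonneg_left convex (exp_pos _).le
  have intX := ((hint x hx).div_const X).const_mul a
  have intY := ((hint y hy).div_const Y).const_mul b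
  rw [log_le_iff_le_exp (integral_exp_pos hint')]
  calc _ ≤ _ := integral_mono hint' ((intX.add intY).const_mul _) pointwise
    _ = exp (a * log X + b * log Y) := by
      simp only [Pi.add_apply]
      rw [integral_const_mul, integral_add intX intY, integral_const_mul, integral_const_mul,
        integral_div, integral_div, ← hX, ← hY, div_self X_pos.ne', div_self Y_pos.ne', mul_one,
        mul_one, hab, mul_one]

/-- The Legendre transform `a ↦ sup_s (s a - L s)`. The supremum takes the junk value `0` where it
is infinite. -/
def legendre (L : ℝ → ℝ) (a : ℝ) : ℝ := ⨆ s, (s * a - L s)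

section Legendre

variable {L : ℝ → ℝ} {m s a : ℝ}

lemma mul_sub_le_of_strongConvexOn (hm : 0 < m) (hL : StrongConvexOn Set.univ m L)
    (hs : HasDerivAt L a s) (r v : ℝ) :
    r * (a + v) - L r ≤ s * (a + v) - L s + (2 * m)⁻¹ * v ^ 2 := by
  have tangent := add_mul_add_sq_le_of_strongConvexOn hL hs r
  have complete_square : (2 * m)⁻¹ * v ^ 2 - (r - s) * v + m / 2 * (r - s) ^ 2 =
      (m * (r - s) - v) ^ 2 / (2 * m) := by
    field_simp; ring
  have : 0 ≤ (m * (r - s) - v) ^ 2 / (2 * m) := by positivity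
  linarith

lemma legendre_le (hm : 0 < m) (hL : StrongConvexOn Set.univ m L) (hs : HasDerivAt L a s) (v : ℝ) :
    legendre L (a + v) ≤ s * (a + v) - L s + (2 * m)⁻¹ * v ^ 2 :=
  ciSup_le fun r => mul_sub_le_of_strongConvexOn hm hL hs r v

lemma le_legendre (hm : 0 < m) (hL : StrongConvexOn Set.univ m L) (hs : HasDerivAt L a s)
    (r v : ℝ) : r * (a + v) - L r ≤ legendre L (a + v) :=
  le_ciSup (f := fun r => r * (a + v) - L r)
    ⟨_, Set.forall_mem_range.2 fun t => mul_sub_le_of_strongConvexOn hm hL hs t v⟩ r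

lemma legendre_eq (hm : 0 < m) (hL : StrongConvexOn Set.univ m L) (hs : HasDerivAt L a s) :
    legendre L a = s * a - L s := by
  simpa using (legendre_le hm hL hs 0).antisymm (by simpa using le_legendre hm hL hs s 0)

lemma abs_legendre_sub_le (hm : 0 < m) (hL : StrongConvexOn Set.univ m L) (hs : HasDerivAt L a s)
    (v : ℝ) : |legendre L (a + v) - legendre L a - s * v| ≤ (2 * m)⁻¹ * v ^ 2 := by
  have lower := le_legendre hm hL hs s v
  have upper := legendre_le hm hL hs v
  have nonneg : 0 ≤ (2 * m)⁻¹ * v ^ 2 := by positivity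
  rw [legendre_eq hm hL hs, abs_le]
  constructor <;> linarith

lemma deriv_legendre (hm : 0 < m) (hL : StrongConvexOn Set.univ m L) (hs : HasDerivAt L a s) :
    deriv (legendre L) a = s := by
  refine HasDerivAt.deriv ?_
  rw [hasDerivAt_iff_isLittleO_nhds_zero]
  refine Asymptotics.IsBigO.trans_isLittleO (g := fun v : ℝ => v ^ 2)
    (.of_bound (2 * m)⁻¹ (.of_forall fun v => ?_))
    (by simpa using Asymptotics.isLittleO_pow_id (𝕜 := ℝ) one_lt_two)
  rw [norm_eq_abs, norm_of_nonneg (sq_nonneg v), smul_eq_mul, mul_comm v]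
  exact abs_legendre_sub_le hm hL hs v

/-! ### The far-field energy -/

lemma legendre_sub_add_mul_ge (hm : 0 < m) (hL : StrongConvexOn Set.univ m L)
    (hs : HasDerivAt L a s) (v g : ℝ) :
    L s - L (s - g) - g * a ≤ legendre L (a + v) - legendre L a - s * v + g * v := by
  linarith [le_legendre hm hL hs (s - g) v, legendre_eq hm hL hs]

lemma legendre_sub_add_mul_eq (hm : 0 < m) (hL : StrongConvexOn Set.univ m L)
    (hs : HasDerivAt L a s) {b g : ℝ} (hg : HasDerivAt L b (s - g)) :
    legendre L (a + (b - a)) - legendre L a - s * (b - a) + g * (b - a) =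
      L s - L (s - g) - g * a := by
  rw [add_sub_cancel, legendre_eq hm hL hs, legendre_eq hm hL hg]
  ring

lemma summable_legendre_sub_add_mul (hm : 0 < m) (hL : StrongConvexOn Set.univ m L)
    (hs : HasDerivAt L a s) {v g : ℕ → ℝ} (hv : Summable fun i => v i ^ 2)
    (hg : Summable fun i => g i ^ 2) :
    Summable fun i => legendre L (a + v i) - legendre L a - s * v i + g i * v i :=
  (Summable.of_norm_bounded (hv.mul_left _) fun i => abs_legendre_sub_le hm hL hs (v i)).add
    (.of_norm_bounded (hg.add hv) fun i => abs_le.2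
      ⟨by nlinarith [sq_nonneg (g i + v i)], by nlinarith [sq_nonneg (g i - v i)]⟩)

lemma summable_sq_of_summable_abs {g : ℕ → ℝ} (hg : Summable fun i => |g i|) :
    Summable fun i => g i ^ 2 := by
  refine summable_of_isBigO hg.of_abs ?_
  simpa only [sq, one_mul] using
    (hg.of_abs.tendsto_cofinite_zero.isBigO_one ℝ).mul (Asymptotics.isBigO_refl g cofinite)

lemma summable_sq_deriv_sub (hL : DifferentiableAt ℝ (deriv L) s) {g : ℕ → ℝ}
    (hg : Summable fun i => |g i|) : Summable fun i => (deriv L (s - g i) - deriv L s) ^ 2 := by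
  have shifted : Tendsto (fun i => s - g i) cofinite (nhds s) := by
    simpa only [sub_zero] using hg.of_abs.tendsto_cofinite_zero.const_sub s
  refine summable_of_isBigO (summable_sq_of_summable_abs hg) ?_
  simpa only [Function.comp_def, sub_sub_cancel_left, neg_sq] using
    (hL.isBigO_sub.comp_tendsto shifted).pow 2

-- The infimum is attained bond by bond: the bond under the force `h i` carries the stress
-- `s - h i`.
theorem summable_and_infJinf_legendre (hm : 0 < m) (hL : StrongConvexOn Set.univ m L)
    (hd : Differentiable ℝ L) (hdd : DifferentiableAt ℝ (deriv L) s) (hs : deriv L s = a)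
    {h : ℕ → ℝ} (hh : Summable fun i => |h i|) :
    (Summable fun i => L s - L (s - h (i + 2)) - h (i + 2) * a) ∧
      infJinf (legendre L) h a = ∑' i, (L s - L (s - h (i + 2)) - h (i + 2) * a) := by
  have hsa : HasDerivAt L a s := hs ▸ (hd s).hasDerivAt
  have hh2 : Summable fun i => |h (i + 2)| := (summable_nat_add_iff 2).2 hh
  have summable_energy {v : ℕ → ℝ} (hv : Summable fun i => v i ^ 2) :=
    summable_legendre_sub_add_mul hm hL hsa hv (summable_sq_of_summable_abs hh2)
  have summable_opt : Summable fun i => (deriv L (s - h (i + 2)) - a) ^ 2 :=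
    hs ▸ summable_sq_deriv_sub hdd hh2
  have energy_opt (i : ℕ) :=
    legendre_sub_add_mul_eq hm hL hsa (g := h (i + 2)) (hd (s - h (i + 2))).hasDerivAt
  have summable := (summable_energy summable_opt).congr energy_opt
  refine ⟨summable, IsLeast.csInf_eq ⟨⟨_, summable_opt, ?_⟩, ?_⟩⟩
  · rw [deriv_legendre hm hL hsa]
    exact (tsum_congr energy_opt).symm
  · rintro _ ⟨v, hv, rfl⟩
    rw [deriv_legendre hm hL hsa]
    exact summable.tsum_le_tsum (fun i => legendre_sub_add_mul_ge hm hL hsa (v i) _)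
      (summable_energy hv)

theorem mul_tsum_add_infJinf_legendre (hm : 0 < m) (hL : StrongConvexOn Set.univ m L)
    (hd : Differentiable ℝ L) (hdd : DifferentiableAt ℝ (deriv L) s) (hs : deriv L s = a)
    {h : ℕ → ℝ} (hh : Summable fun i => |h i|) :
    a * (∑' i, h (i + 2)) + infJinf (legendre L) h a = -∑' i, (L (s - h (i + 2)) - L s) := by
  obtain ⟨summable, eq_tsum⟩ := summable_and_infJinf_legendre hm hL hd hdd hs hh
  have summable_force : Summable fun i => a * h (i + 2) :=
    ((summable_nat_add_iff 2).2 hh.of_abs).mul_left a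
  rw [eq_tsum, ← tsum_mul_left, ← summable_force.tsum_add summable, ← tsum_neg]
  congr with i
  ring

end Legendre

/-! ### A single bond -/

/-- The Gibbs weight of a single bond with potential `φ` under the stress `s`. -/
def boltzmann (φ : ℝ → ℝ) (s y : ℝ) : ℝ := exp (-φ y + s * y)

/-- The log-partition function of a single bond, whose Legendre transform is the Cauchy–Born strain
energy. -/
def logPartition (φ : ℝ → ℝ) (s : ℝ) : ℝ := log (∫ y, boltzmann φ s y)

lemma W_eq_legendre (ψ : ℝ → ℝ) : W ψ = legendre (logPartition ψ) := rfl

lemma boltzmann_add_mul (φ : ℝ → ℝ) (g s : ℝ) :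
    boltzmann (fun y => φ y + g * y) s = boltzmann φ (s - g) := by
  ext y
  rw [boltzmann, boltzmann]
  ring_nf

lemma exp_mul_boltzmann (φ : ℝ → ℝ) (l s y : ℝ) :
    exp (l * y) * boltzmann φ s y = boltzmann φ (s + l) y := by
  rw [boltzmann, boltzmann, ← exp_add]
  ring_nf

lemma contDiff_logPartition {φ : ℝ → ℝ} {n : WithTop ℕ∞} (hφ : Measurable φ)
    (hint : ∀ s, Integrable (boltzmann φ s)) : ContDiff ℝ n (logPartition φ) := by
  set μ : Measure ℝ := volume.withDensity fun y => ENNReal.ofReal (exp (-φ y)) with hμ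
  have measurable : Measurable fun y => ENNReal.ofReal (exp (-φ y)) := by fun_prop
  have density (s : ℝ) : (fun y => (ENNReal.ofReal (exp (-φ y))).toReal • exp (s * y)) =
      boltzmann φ s := by
    ext y
    rw [ENNReal.toReal_ofReal (exp_pos _).le, smul_eq_mul, ← exp_add, boltzmann]
  have integrableExpSet_univ : ProbabilityTheory.integrableExpSet id μ = Set.univ := by
    refine Set.eq_univ_of_forall fun s => ?_
    rw [ProbabilityTheory.integrableExpSet, Set.mem_ofPred_eq, hμ,
      integrable_withDensity_iff_integrable_smul' measurable (by simp)]
    exact (density s ▸ hint s :)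
  have eq_cgf : logPartition φ = ProbabilityTheory.cgf id μ := by
    ext s
    rw [ProbabilityTheory.cgf, ProbabilityTheory.mgf, hμ,
      integral_withDensity_eq_integral_toReal_smul measurable (by simp), logPartition, ← density]
    rfl
  have analytic := ProbabilityTheory.analyticOnNhd_cgf (X := id) (μ := μ)
  rw [integrableExpSet_univ, interior_univ, ← eq_cgf] at analytic
  exact contDiffOn_univ.1 (analytic.contDiffOn uniqueDiffOn_univ)

lemma abs_exp_sub_one_le_mul_exp_abs (x : ℝ) : |exp x - 1| ≤ |x| * exp |x| := by
  have abs_le_mul : |x| ≤ |x| * exp |x| :=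
    le_mul_of_one_le_right (abs_nonneg x) (one_le_exp (abs_nonneg x))
  rw [abs_le]
  constructor
  · linarith [add_one_le_exp x, neg_abs_le x]
  · have exp_mul_le : exp x * (-x + 1) ≤ 1 := by
      calc exp x * (-x + 1) ≤ exp x * exp (-x) := by gcongr; exact add_one_le_exp _
        _ = 1 := by rw [← exp_add, add_neg_cancel, exp_zero]
    have mul_exp_le : x * exp x ≤ |x| * exp |x| := by
      gcongr <;> exact le_abs_self x
    linarith

lemma abs_exp_mul_sub_one_le {u B : ℝ} (hu : |u| ≤ B) (y : ℝ) :
    |exp (u * y) - 1| ≤ |u| * (exp ((B + 1) * y) + exp (-(B + 1) * y)) := by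
  have B_nonneg : 0 ≤ B := (abs_nonneg u).trans hu
  calc |exp (u * y) - 1| ≤ |u| * (|y| * exp (|u| * |y|)) := by
        simpa only [abs_mul, mul_assoc] using abs_exp_sub_one_le_mul_exp_abs (u * y)
    _ ≤ |u| * (exp |y| * exp (B * |y|)) := by
        gcongr
        linarith [add_one_le_exp |y|]
    _ = |u| * exp |(B + 1) * y| := by
        rw [← exp_add, abs_mul, abs_of_nonneg (by linarith : 0 ≤ B + 1)]
        ring_nf
    _ ≤ |u| * (exp ((B + 1) * y) + exp (-(B + 1) * y)) := by
        rw [neg_mul]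
        gcongr
        exact exp_abs_le _

lemma integral_abs_boltzmann_sub_le {φ : ℝ → ℝ} (hint : ∀ s, Integrable (boltzmann φ s)) (s : ℝ)
    {u B : ℝ} (hu : |u| ≤ B) :
    ∫ y, |boltzmann φ (s + u) y - boltzmann φ s y| ≤
      |u| * ((∫ y, boltzmann φ (s + (B + 1)) y) + ∫ y, boltzmann φ (s + -(B + 1)) y) := by
  rw [← integral_add (hint _) (hint _), ← integral_const_mul]
  refine integral_mono ((hint _).sub (hint _)).abs (((hint _).add (hint _)).const_mul |u|)
    fun y => ?_
  simp only [← exp_mul_boltzmann φ _ s y]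
  rw [← sub_one_mul, ← add_mul, ← mul_assoc, abs_mul,
    abs_of_pos (show 0 < boltzmann φ s y from exp_pos _)]
  exact mul_le_mul_of_nonneg_right (abs_exp_mul_sub_one_le hu y) (exp_pos _).le

lemma exists_sub_le_of_contDiff {L : ℝ → ℝ} (hL : ContDiff ℝ 2 L) (s B : ℝ) :
    ∃ M, ∀ u l : ℝ, |u| ≤ B → |l| ≤ 1 →
      L (s + u + l) - L (s + u) ≤ l * deriv L s + M * l ^ 2 + M * |u| := by
  have contDiff_deriv : ContDiff ℝ 1 (deriv L) := ((contDiff_succ_iff_deriv (n := 1)).1 hL).2.2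
  obtain ⟨M, lipschitz⟩ := contDiff_deriv.contDiffOn.exists_lipschitzOnWith one_ne_zero
    (convex_closedBall s (B + 1)) (isCompact_closedBall s (B + 1))
  refine ⟨M, fun u l hu hl => ?_⟩
  set r := |u| + |l| with hr
  have r_le : r ≤ B + 1 := add_le_add hu hl
  have hasDerivAt (σ : ℝ) : HasDerivAt (fun σ => L σ - deriv L s * σ) (deriv L σ - deriv L s) σ :=
    (hL.differentiable two_ne_zero σ).hasDerivAt.sub (hasDerivAt_const_mul _)
  have deriv_le : ∀ σ ∈ Metric.closedBall s r, ‖deriv L σ - deriv L s‖ ≤ M * r := fun σ hσ =>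
    calc ‖deriv L σ - deriv L s‖ = dist (deriv L σ) (deriv L s) := (dist_eq_norm _ _).symm
      _ ≤ M * dist σ s := lipschitz.dist_le_mul _ (Metric.closedBall_subset_closedBall r_le hσ) _
          (Metric.mem_closedBall_self ((by positivity : 0 ≤ r).trans r_le))
      _ ≤ M * r := by gcongr; exact hσ
  have mean_value := (convex_closedBall s r).norm_image_sub_le_of_norm_hasDerivWithin_le
    (fun σ _ => (hasDerivAt σ).hasDerivWithinAt) deriv_le
    (x := s + u) (y := s + u + l)
    (by simp [hr])
    (by
      rw [mem_closedBall_iff_norm, add_assoc, add_sub_cancel_left]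
      exact norm_add_le u l)
  rw [add_sub_cancel_left, norm_eq_abs, norm_eq_abs] at mean_value
  have mul_le : M * r * |l| ≤ M * l ^ 2 + M * |u| := by
    rw [hr, ← sq_abs l]
    have := mul_le_of_le_one_right (mul_nonneg M.coe_nonneg (abs_nonneg u)) hl
    linarith
  linarith [(le_abs_self _).trans mean_value]

/-- A bond potential with `ψ'' ≤ κ`, in the form of semiconcavity, which confines the bond under
every stress. -/
structure IsBondPotential (κ : ℝ) (ψ : ℝ → ℝ) : Prop where
  modulus_pos : 0 < κ
  semiconcave : StrongConcaveOn Set.univ (-κ) ψ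
  integrable : ∀ s, Integrable (boltzmann ψ s)

namespace IsBondPotential

variable {κ : ℝ} {ψ : ℝ → ℝ}

lemma convexOn (hψ : IsBondPotential κ ψ) : ConvexOn ℝ Set.univ fun y => κ / 2 * y ^ 2 - ψ y := by
  have concave := (strongConcaveOn_iff_convex.1 hψ.semiconcave).neg
  refine concave.congr fun y _ => ?_
  simp only [Pi.neg_apply, norm_eq_abs, sq_abs]
  ring

lemma continuous (hψ : IsBondPotential κ ψ) : Continuous ψ := by
  have continuous_sub := continuousOn_univ.1 (hψ.convexOn.continuousOn isOpen_univ)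
  have continuous_sq : Continuous fun y : ℝ => κ / 2 * y ^ 2 := by fun_prop
  exact (continuous_sq.sub continuous_sub).congr fun y => sub_sub_cancel _ _

lemma isWeight (hψ : IsBondPotential κ ψ) (s : ℝ) : IsWeight (boltzmann ψ s) where
  continuous := by
    have := hψ.continuous
    unfold boltzmann
    fun_prop
  pos _ := exp_pos _
  integrable := hψ.integrable s

lemma exp_logPartition (hψ : IsBondPotential κ ψ) (s : ℝ) :
    exp (logPartition ψ s) = ∫ y, boltzmann ψ s y :=
  exp_log (hψ.isWeight s).integral_pos

lemma contDiff_logPartition (hψ : IsBondPotential κ ψ) : ContDiff ℝ 2 (logPartition ψ) :=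
  _root_.contDiff_logPartition hψ.continuous.measurable hψ.integrable

-- Shifting the integration variable by `s / κ` turns the integrand of
-- `exp (logPartition ψ s - s ^ 2 / (2 κ))` into a function that is log-convex in `s`.
theorem strongConvexOn_logPartition (hψ : IsBondPotential κ ψ) :
    StrongConvexOn Set.univ κ⁻¹ (logPartition ψ) := by
  have hκ := hψ.modulus_pos
  set F : ℝ → ℝ → ℝ := fun s z =>
    κ / 2 * (z + s / κ) ^ 2 - ψ (z + s / κ) - κ / 2 * z ^ 2 with hF
  have convex (z : ℝ) : ConvexOn ℝ Set.univ fun s => F s z := by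
    refine ((hψ.convexOn.comp_affineMap (AffineMap.lineMap z (z + κ⁻¹))).add_const
      (-(κ / 2 * z ^ 2))).congr fun s _ => ?_
    simp [hF, AffineMap.lineMap_apply, div_eq_mul_inv, add_comm, sub_eq_add_neg]
  have exp_F (s z : ℝ) : exp (F s z) = exp (-(κ⁻¹ / 2 * s ^ 2)) * boltzmann ψ s (z + s / κ) := by
    rw [boltzmann, ← exp_add]
    congr 1
    simp only [hF]
    field_simp
    ring
  have integrable (s : ℝ) : Integrable fun z => exp (F s z) := by
    simpa only [exp_F] using ((hψ.integrable s).comp_add_right (s / κ)).const_mul _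
  rw [strongConvexOn_iff_convex]
  refine (convexOn_log_integral_exp convex_univ convex fun s _ => integrable s).congr fun s _ => ?_
  simp only [exp_F]
  rw [integral_const_mul, integral_add_right_eq_self (boltzmann ψ s) (s / κ),
    log_mul (exp_pos _).ne' (hψ.isWeight s).integral_pos.ne', log_exp, norm_eq_abs, sq_abs,
    logPartition]
  ring

lemma semiLogConvex (hψ : IsBondPotential κ ψ) (s : ℝ) : SemiLogConvex (1 / κ) (boltzmann ψ s) where
  toIsWeight := hψ.isWeight s
  var_pos := one_div_pos.2 hψ.modulus_pos
  midpoint x t := by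
    have midpoint := hψ.semiconcave.2 (Set.mem_univ (x + t)) (Set.mem_univ (x - t))
      one_half_pos.le one_half_pos.le (add_halves 1)
    simp only [smul_eq_mul, norm_eq_abs, sq_abs,
      show 1 / 2 * (x + t) + 1 / 2 * (x - t) = x by ring] at midpoint
    simp only [boltzmann]
    rw [← exp_nat_mul, ← exp_add, ← exp_add, exp_le_exp, div_div_eq_mul_div, div_one]
    push_cast
    linarith

lemma exists_isBulk (hψ : IsBondPotential κ ψ) {s A : ℝ} (hs : deriv (logPartition ψ) s = A)
    (B : ℝ) : ∃ M, ∀ u, |u| ≤ B → IsBulk κ M A 1 (M * |u|) (boltzmann ψ (s + u)) := by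
  obtain ⟨M, hM⟩ := exists_sub_le_of_contDiff hψ.contDiff_logPartition s B
  refine ⟨M, fun u hu => ?_⟩
  have toSemiLogConvex := hψ.semiLogConvex (s + u)
  rw [← Nat.cast_one] at toSemiLogConvex
  refine ⟨toSemiLogConvex, fun l _ => ?_, fun l hl => ?_⟩
  · simpa only [exp_mul_boltzmann] using hψ.integrable (s + u + l)
  · have := hM u l hu hl
    simp only [exp_mul_boltzmann]
    rw [← hψ.exp_logPartition, ← hψ.exp_logPartition, ← exp_add, exp_le_exp, ← hs]
    push_cast
    linarith

end IsBondPotential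

/-! ### Twice differentiable potentials -/

section Deriv2

variable {φ : ℝ → ℝ} {m κ : ℝ}

lemma strongConvexOn_univ_of_le_deriv2 (hφ : Differentiable ℝ φ) (hφ' : Differentiable ℝ (deriv φ))
    (hm : ∀ y, m ≤ deriv (deriv φ) y) : StrongConvexOn Set.univ m φ := by
  have deriv_sub_sq : deriv (fun y => φ y - m / 2 * y ^ 2) = fun y => deriv φ y - m * y := by
    ext y
    refine ((hφ y).hasDerivAt.sub ((hasDerivAt_pow 2 y).const_mul (m / 2))).congr_deriv ?_ |>.deriv
    push_cast
    ring
  have deriv2_sub_sq (y : ℝ) : deriv (fun y => deriv φ y - m * y) y = deriv (deriv φ) y - m :=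
    ((hφ' y).hasDerivAt.sub (hasDerivAt_const_mul m)).deriv
  rw [strongConvexOn_iff_convex]
  simp only [norm_eq_abs, sq_abs]
  refine convexOn_univ_of_deriv2_nonneg (by fun_prop) (deriv_sub_sq ▸ by fun_prop) fun y => ?_
  rw [Function.iterate_succ_apply, Function.iterate_one, deriv_sub_sq, deriv2_sub_sq]
  exact sub_nonneg.2 (hm y)

lemma strongConcaveOn_univ_of_deriv2_le (hφ : Differentiable ℝ φ) (hφ' : Differentiable ℝ (deriv φ))
    (hκ : ∀ y, deriv (deriv φ) y ≤ κ) : StrongConcaveOn Set.univ (-κ) φ := by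
  have deriv_neg : deriv (-φ) = -deriv φ := deriv.neg'
  have strongConvex : StrongConvexOn Set.univ (-κ) (-φ) := by
    refine strongConvexOn_univ_of_le_deriv2 hφ.neg (deriv_neg ▸ hφ'.neg) fun y => ?_
    rw [deriv_neg, deriv.neg]
    exact neg_le_neg (hκ y)
  exact neg_neg φ ▸ strongConvex.neg

lemma isWeight_boltzmann_of_strongConvexOn (hm : 0 < m) (hφ : StrongConvexOn Set.univ m φ)
    (hd : Differentiable ℝ φ) (s : ℝ) : IsWeight (boltzmann φ s) := by
  have continuous : Continuous (boltzmann φ s) := by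
    have := hd.continuous
    unfold boltzmann
    fun_prop
  refine ⟨continuous, fun y => exp_pos _, ?_⟩
  set b := s - deriv φ 0 with hb
  refine ((integrable_exp_neg_mul_sq (b := m / 4) (by positivity)).const_mul
    (exp (b ^ 2 / m - φ 0))).mono' continuous.aestronglyMeasurable (ae_of_all _ fun y => ?_)
  have tangent := add_mul_add_sq_le_of_strongConvexOn hφ (hd 0).hasDerivAt y
  have complete_square :
      b * y - m / 2 * y ^ 2 = b ^ 2 / m - m / 4 * y ^ 2 - (m / 2 * y - b) ^ 2 / m := by
    field_simp
    ring
  have sq_div_nonneg : 0 ≤ (m / 2 * y - b) ^ 2 / m := by positivity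
  rw [boltzmann, norm_of_nonneg (exp_pos _).le, ← exp_add, exp_le_exp]
  rw [sub_zero] at tangent
  rw [hb, sub_mul] at complete_square
  linarith

lemma isWeight_boltzmann_of_le_deriv2 (hm : 0 < m) (hφ : ContDiff ℝ 2 φ)
    (h : ∀ y, m ≤ deriv (deriv φ) y) (s : ℝ) : IsWeight (boltzmann φ s) :=
  have differentiable := hφ.differentiable two_ne_zero
  isWeight_boltzmann_of_strongConvexOn hm
    (strongConvexOn_univ_of_le_deriv2 differentiable hφ.differentiable_deriv_two h) differentiable s

lemma isBondPotential_of_deriv2_mem_Icc (hm : 0 < m) (hφ : ContDiff ℝ 2 φ)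
    (h : ∀ y, deriv (deriv φ) y ∈ Set.Icc m κ) : IsBondPotential κ φ where
  modulus_pos := hm.trans_le ((h 0).1.trans (h 0).2)
  semiconcave := strongConcaveOn_univ_of_deriv2_le (hφ.differentiable two_ne_zero)
    hφ.differentiable_deriv_two fun y => (h y).2
  integrable s := (isWeight_boltzmann_of_le_deriv2 hm hφ (fun y => (h y).1) s).integrable

end Deriv2

/-! ### The configuration integral as a convolution -/

/-- The Gibbs weight of a clamped chain of `n + 1` bonds with displacements `u`, the first bond
having the weight `f` and the following ones `q 0, …, q (n - 1)`. -/
def pathWeight (f : ℝ → ℝ) (q : ℕ → ℝ → ℝ) (n : ℕ) (b : ℝ) (u : Fin n → ℝ) : ℝ :=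
  f (bc (n + 1) b u 1) * ∏ i ∈ Finset.range n, q i (bc (n + 1) b u (i + 2) - bc (n + 1) b u (i + 1))

section PathWeight

variable {f : ℝ → ℝ} {q : ℕ → ℝ → ℝ}

lemma bc_zero (n : ℕ) (b : ℝ) (u : Fin (n - 1) → ℝ) : bc n b u 0 = 0 := by
  simp [bc]

lemma bc_self {n : ℕ} (hn : n ≠ 0) (b : ℝ) (u : Fin (n - 1) → ℝ) : bc n b u n = b := by
  simp [bc, hn]

lemma continuous_bc (n i : ℕ) : Continuous fun z : ℝ × (Fin n → ℝ) => bc (n + 1) z.1 z.2 i := by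
  unfold bc
  split_ifs
  · exact (continuous_apply _).comp continuous_snd
  · exact continuous_const
  · exact continuous_fst

lemma bc_snoc {n i : ℕ} (b y : ℝ) (v : Fin n → ℝ) (hi : i ≤ n + 1) :
    bc (n + 2) b (Fin.snoc (α := fun _ => ℝ) v y) i = bc (n + 1) y v i := by
  rcases Nat.eq_zero_or_pos i with rfl | pos
  · simp only [bc_zero]
  · rw [bc, dif_pos ⟨pos, by omega⟩]
    rcases Nat.eq_or_lt_of_le hi with rfl | lt
    · rw [bc_self n.succ_ne_zero]
      exact Fin.snoc_last (α := fun _ => ℝ) y v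
    · rw [bc, dif_pos ⟨pos, lt⟩]
      exact Fin.snoc_castSucc (α := fun _ => ℝ) y v ⟨i - 1, by omega⟩

lemma pathWeight_snoc (f : ℝ → ℝ) (q : ℕ → ℝ → ℝ) {n : ℕ} (b y : ℝ) (v : Fin n → ℝ) :
    pathWeight f q (n + 1) b (Fin.snoc (α := fun _ => ℝ) v y) =
      pathWeight f q n y v * q n (b - y) := by
  rw [pathWeight, Finset.prod_range_succ, bc_snoc b y v (by omega), bc_snoc b y v le_rfl,
    bc_self (n + 1).succ_ne_zero, bc_self n.succ_ne_zero, ← mul_assoc, pathWeight]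
  congr 2
  refine Finset.prod_congr rfl fun i hi => ?_
  have := Finset.mem_range.1 hi
  rw [bc_snoc b y v (by omega), bc_snoc b y v (by omega)]

lemma pathWeight_pos (hf : IsWeight f) (hq : ∀ i, IsBddWeight (q i)) (n : ℕ) (b : ℝ)
    (u : Fin n → ℝ) : 0 < pathWeight f q n b u :=
  mul_pos (hf.pos _) (Finset.prod_pos fun i _ => (hq i).pos _)

lemma continuous_pathWeight (hf : IsWeight f) (hq : ∀ i, IsBddWeight (q i)) (n : ℕ) :
    Continuous fun z : ℝ × (Fin n → ℝ) => pathWeight f q n z.1 z.2 :=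
  (hf.continuous.comp (continuous_bc n 1)).mul (continuous_finsetProd _ fun i _ =>
    (hq i).continuous.comp ((continuous_bc n (i + 2)).sub (continuous_bc n (i + 1))))

lemma integrable_pathWeight_mul (hf : IsWeight f) (hq : ∀ i, IsBddWeight (q i)) {n : ℕ}
    (ih : ∀ y, Integrable (pathWeight f q n y) ∧ ∫ v, pathWeight f q n y v = chain f q n y)
    (b : ℝ) :
    Integrable fun z : ℝ × (Fin n → ℝ) => pathWeight f q n z.1 z.2 * q n (b - z.1) := by
  have cont : Continuous fun z : ℝ × (Fin n → ℝ) => pathWeight f q n z.1 z.2 * q n (b - z.1) :=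
    (continuous_pathWeight hf hq n).mul
      ((hq n).continuous.comp (continuous_const.sub continuous_fst))
  rw [Measure.volume_eq_prod, integrable_prod_iff cont.aestronglyMeasurable]
  refine ⟨ae_of_all _ fun y => (ih y).1.mul_const (q n (b - y)), ?_⟩
  have integral_norm (y : ℝ) :
      ∫ v, ‖pathWeight f q n y v * q n (b - y)‖ = chain f q n y * q n (b - y) := by
    rw [← (ih y).2, ← integral_mul_const]
    congr with v
    exact norm_of_nonneg (mul_pos (pathWeight_pos hf hq n y v) ((hq n).pos _)).le
  simp only [integral_norm]
  exact (hf.chain hq n).integrable_mul (hq n) b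

-- The position of the last free atom is integrated out first.
theorem integral_pathWeight (hf : IsWeight f) (hq : ∀ i, IsBddWeight (q i)) (n : ℕ) (b : ℝ) :
    Integrable (pathWeight f q n b) ∧ ∫ u, pathWeight f q n b u = chain f q n b := by
  induction n generalizing b with
  | zero =>
    have dirac : (volume : Measure (Fin 0 → ℝ)) = Measure.dirac default :=
      Measure.volume_pi_eq_dirac _
    rw [dirac]
    refine ⟨integrable_dirac (by simp), ?_⟩
    rw [integral_dirac]
    simp [chain, pathWeight, bc]
  | succ n ih =>
    set e := (MeasurableEquiv.piFinSuccAbove (fun _ : Fin (n + 1) => ℝ) (Fin.last n)).symm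
    have preserving : MeasurePreserving e :=
      (volume_preserving_piFinSuccAbove (fun _ : Fin (n + 1) => ℝ) (Fin.last n)).symm
    have split_last (z : ℝ × (Fin n → ℝ)) :
        pathWeight f q (n + 1) b (e z) = pathWeight f q n z.1 z.2 * q n (b - z.1) := by
      rw [← pathWeight_snoc, ← Fin.insertNth_last']
      rfl
    have integrable := integrable_pathWeight_mul hf hq ih b
    constructor
    · rw [← preserving.integrable_comp_emb e.measurableEmbedding]
      exact integrable.congr (ae_of_all _ fun z => (split_last z).symm)
    · rw [← preserving.integral_comp e.measurableEmbedding]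
      simp only [split_last]
      rw [Measure.volume_eq_prod, integral_prod _ integrable, chain, convolution_lsmul]
      simp only [integral_mul_const, (ih _).2, smul_eq_mul]

end PathWeight

-- The tilt `s` costs only a boundary term since the increments of the chain add up to `b`.
lemma pathWeight_boltzmann (φ : ℕ → ℝ → ℝ) (D : ℝ → ℝ) (s : ℝ) (n : ℕ) (b : ℝ) (u : Fin n → ℝ) :
    pathWeight (boltzmann (fun y => φ 1 y + D y) s) (fun i => boltzmann (φ (i + 2)) s) n b u =
      exp (s * b) * exp (-chainE φ (n + 1) b u - D (bc (n + 1) b u 1)) := by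
  have energy : chainE φ (n + 1) b u = (∑ i ∈ Finset.range n,
      φ (i + 2) (bc (n + 1) b u (i + 2) - bc (n + 1) b u (i + 1))) +
        φ 1 (bc (n + 1) b u 1) := by
    rw [chainE, Finset.sum_range_succ']
    simp only [bc_zero, sub_zero]
  have telescope := Finset.sum_range_sub (fun i => bc (n + 1) b u (i + 1)) n
  rw [bc_self n.succ_ne_zero] at telescope
  simp only [pathWeight, boltzmann]
  rw [← exp_sum, ← exp_add, ← exp_add, Finset.sum_add_distrib, ← Finset.mul_sum,
    telescope, Finset.sum_neg_distrib, energy]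
  ring_nf

lemma freeEnergy_succ {φ : ℕ → ℝ → ℝ} {D : ℝ → ℝ} {s : ℝ}
    (hf : IsWeight (boltzmann (fun y => φ 1 y + D y) s))
    (hq : ∀ i, IsBddWeight (boltzmann (φ (i + 2)) s)) (n : ℕ) (A : ℝ) :
    freeEnergy φ D (n + 1) A = s * ((n + 1) * A) -
      log (chain (boltzmann (fun y => φ 1 y + D y) s) (fun i => boltzmann (φ (i + 2)) s) n
        ((n + 1) * A)) := by
  have chain_pos := (hf.chain hq n).pos ((n + 1) * A)
  rw [← (integral_pathWeight hf hq n _).2] at chain_pos ⊢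
  simp only [pathWeight_boltzmann, integral_const_mul] at chain_pos ⊢
  rw [log_mul (exp_pos _).ne' (pos_of_mul_pos_right chain_pos (exp_pos _).le).ne', log_exp,
    sub_add_cancel_left, freeEnergy]
  push_cast
  rfl

/-! ### The thermodynamic limit -/

section Limit

variable {ψ P : ℝ → ℝ} {κ s A : ℝ} {h : ℕ → ℝ}

lemma freeEnergy_sub_freeEnergy (hψ : IsBondPotential κ ψ)
    (hf : IsWeight (boltzmann (fun y => ψ y + P y) (s - h 1))) (n : ℕ) :
    freeEnergy (fun i z => ψ z + h i * z) P (n + 1) A -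
        freeEnergy (fun _ => ψ) (fun _ => 0) (n + 1) A =
      -(log (chain (boltzmann (fun y => ψ y + P y) (s - h 1))
          (fun i => boltzmann ψ (s - h (i + 2))) n ((n + 1) * A)) -
        log (chain (boltzmann ψ s) (fun _ => boltzmann ψ s) n ((n + 1) * A))) := by
  have first_bond : boltzmann (fun y => ψ y + h 1 * y + P y) s =
      boltzmann (fun y => ψ y + P y) (s - h 1) := by
    rw [← boltzmann_add_mul]
    simp only [add_right_comm]
  have bond (s : ℝ) := (hψ.semiLogConvex s).toIsBddWeight
  rw [freeEnergy_succ (s := s) (first_bond ▸ hf) (fun i => boltzmann_add_mul ψ _ s ▸ bond _),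
    freeEnergy_succ (s := s) (by simpa only [add_zero] using hψ.isWeight s) (fun _ => bond s),
    first_bond]
  simp only [boltzmann_add_mul, add_zero]
  ring

lemma tendsto_log_chain_boltzmann_sub {f : ℝ → ℝ} (hψ : IsBondPotential κ ψ) (hf : IsWeight f)
    (hs : deriv (logPartition ψ) s = A) (hh : Summable fun i => |h i|) :
    Tendsto (fun n : ℕ =>
      log (chain f (fun i => boltzmann ψ (s - h (i + 2))) (n + 1) ((n + 2) * A)) -
        log (chain (boltzmann ψ s) (fun _ => boltzmann ψ s) (n + 1) ((n + 2) * A))) atTop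
      (nhds (log (∫ y, f y) - logPartition ψ s +
        ∑' i, (logPartition ψ (s - h (i + 2)) - logPartition ψ s))) := by
  set B := ∑' i, |h i|
  have h_le (i : ℕ) : |-h i| ≤ B := abs_neg (h i) ▸ hh.le_tsum i fun _ _ => abs_nonneg _
  have summable_h : Summable fun i => |-h (i + 2)| := by
    simpa only [abs_neg] using (summable_nat_add_iff 2).2 hh
  obtain ⟨M, isBulk⟩ := hψ.exists_isBulk hs B
  have isBulk_zero := isBulk 0 (abs_zero.trans_le ((abs_nonneg _).trans (h_le 0)))
  rw [abs_zero, mul_zero, add_zero] at isBulk_zero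
  simp only [sub_eq_add_neg s]
  exact tendsto_log_chain_sub hf isBulk_zero (fun i => isBulk _ (h_le (i + 2)))
    (summable_h.mul_left M)
    (.of_nonneg_of_le (fun _ => integral_nonneg fun _ => abs_nonneg _)
      (fun i => integral_abs_boltzmann_sub_le hψ.integrable s (h_le (i + 2)))
      (summable_h.mul_right _))

lemma log_integral_exp_sub_EcgF_div (hψ : IsBondPotential κ ψ)
    (hf : IsWeight (boltzmann (fun y => ψ y + P y) (s - h 1))) (hW : deriv (W ψ) A = s) :
    log ((∫ y, exp (-(ψ y + h 1 * y + P y) - EcgF ψ h A y)) /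
        ∫ y, exp (-ψ y - deriv (W ψ) A * (A - y))) =
      log (∫ y, boltzmann (fun y => ψ y + P y) (s - h 1) y) - logPartition ψ s -
        (A * (∑' i, h (i + 2)) + infJinf (W ψ) h A) := by
  set E := A * (∑' i, h (i + 2)) + infJinf (W ψ) h A with hE
  have numerator (y : ℝ) : exp (-(ψ y + h 1 * y + P y) - EcgF ψ h A y) =
      exp (-(A * s) - E) * boltzmann (fun y => ψ y + P y) (s - h 1) y := by
    rw [EcgF, hW, boltzmann, ← exp_add, hE]
    ring_nf
  have denominator (y : ℝ) : exp (-ψ y - deriv (W ψ) A * (A - y)) =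
      exp (-(A * s)) * boltzmann ψ s y := by
    rw [hW, boltzmann, ← exp_add]
    ring_nf
  have f_pos := hf.integral_pos
  have p_pos := (hψ.isWeight s).integral_pos
  simp only [numerator, denominator, integral_const_mul]
  rw [log_div (mul_pos (exp_pos _) f_pos).ne' (mul_pos (exp_pos _) p_pos).ne',
    log_mul (exp_pos _).ne' f_pos.ne', log_mul (exp_pos _).ne' p_pos.ne', log_exp, log_exp,
    logPartition]
  ring

theorem thermodynamic_limit_with_forces_general (hψ : IsBondPotential κ ψ)
    (hf : IsWeight (boltzmann (fun y => ψ y + P y) (deriv (W ψ) A - h 1)))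
    (hh : Summable fun i => |h i|) :
    Tendsto (fun N : ℕ => freeEnergy (fun i z => ψ z + h i * z) P N A -
        freeEnergy (fun _ => ψ) (fun _ => 0) N A) atTop
      (nhds (-log ((∫ y, exp (-(ψ y + h 1 * y + P y) - EcgF ψ h A y)) /
        ∫ y, exp (-ψ y - deriv (W ψ) A * (A - y))))) := by
  have contDiff := hψ.contDiff_logPartition
  have strongConvex := hψ.strongConvexOn_logPartition
  have modulus_pos : 0 < κ⁻¹ := inv_pos.2 hψ.modulus_pos
  have differentiable := contDiff.differentiable two_ne_zero
  obtain ⟨s, hs⟩ := surjective_deriv_of_strongConvexOn modulus_pos strongConvex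
    (contDiff.of_le one_le_two) A
  have hW : deriv (W ψ) A = s :=
    deriv_legendre modulus_pos strongConvex (hs ▸ (differentiable s).hasDerivAt)
  have coarse := mul_tsum_add_infJinf_legendre modulus_pos strongConvex differentiable
    (contDiff.differentiable_deriv_two s) hs hh
  rw [hW] at hf
  rw [← tendsto_add_atTop_iff_nat 2, log_integral_exp_sub_EcgF_div hψ hf hW, W_eq_legendre, coarse,
    sub_neg_eq_add]
  refine (tendsto_log_chain_boltzmann_sub hψ hf hs hh).neg.congr fun n => ?_
  rw [freeEnergy_sub_freeEnergy hψ hf]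
  push_cast
  norm_num [add_assoc]

end Limit

/-- thermodynamic limit of the defect-formation free energy with external
forces, represented via the coarse-grained energy. -/
theorem thermodynamic_limit_with_forces
    (ψ P : ℝ → ℝ) (κ₁ κ₂ ς₁ ς₂ : ℝ)
    (hψ : ContDiff ℝ 2 ψ) (hP : ContDiff ℝ 2 P)
    (hκ₁ : 0 < κ₁) (hκ : κ₁ ≤ κ₂) (hς₁ : 0 < ς₁) (hς : ς₁ ≤ ς₂)
    (hψ'' : ∀ y : ℝ, κ₁ ≤ deriv (deriv ψ) y ∧ deriv (deriv ψ) y ≤ κ₂)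
    (hψP'' : ∀ y : ℝ, ς₁ ≤ deriv (deriv (fun z => ψ z + P z)) y ∧
        deriv (deriv (fun z => ψ z + P z)) y ≤ ς₂)
    (h : ℕ → ℝ) (hh : Summable fun i => |h i|)
    (A : ℝ) :
    Tendsto
      (fun N : ℕ =>
        freeEnergy (fun i z => ψ z + h i * z) P N A -
          freeEnergy (fun _ => ψ) (fun _ => 0) N A)
      atTop
      (nhds (- Real.log
        ((∫ y : ℝ, Real.exp (-(ψ y + h 1 * y + P y) - EcgF ψ h A y)) /
         (∫ y : ℝ, Real.exp (-ψ y - deriv (W ψ) A * (A - y)))))) :=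
  thermodynamic_limit_with_forces_general (isBondPotential_of_deriv2_mem_Icc hκ₁ hψ hψ'')
    (isWeight_boltzmann_of_le_deriv2 hς₁ (hψ.add hP) (fun y => (hψP'' y).1) _) hh
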